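/- arXiv:2406.09510 — 5 statements merged into one kernel-verified Lean document; each statement's English description precedes it below -/
import Mathlib

section
/- For every real u with 0.841 < u < 1, setting v = √(1−u²), u₀ = u, v₀ = v, u₁ = v, v₁ = −u, the following linear system is infeasible: there exist no nonnegative reals q(i,j,k,l,t), indexed by i,j,k,l ∈ {0,1} and t ∈ {cw, acw}, such that (i) for all i,j,k,l: q(i,j,k,l,cw) + q(i,j,k,l,acw) = ½(u_i u_j u_k u_l + v_i v_j v_k v_l)², and (ii) for each of the four index positions and each value b ∈ {0,1}, the single-index marginals satisfy Σ (over the other three indices) q(…,cw) = v_b²/2 and Σ (over the other three indices) q(…,acw) = u_b²/2 (e.g. Σ_{j,k,l} q(i,j,k,l,cw) = v_i²/2 and Σ_{j,k,l} q(i,j,k,l,acw) = u_i²/2, and similarly for the positions of j, k and l). -/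
noncomputable def uco (u : ℝ) : Fin 2 → ℝ := ![u, Real.sqrt (1 - u ^ 2)]
noncomputable def vco (u : ℝ) : Fin 2 → ℝ := ![Real.sqrt (1 - u ^ 2), -u]

/-- infeasibility of the square-network token-counting linear program.
The token direction `t ∈ {cw, acw}` is encoded by a `Bool`, `true` standing for `cw`
and `false` for `acw`. -/
theorem stmt_3 (u : ℝ) (hu : (0.841 : ℝ) < u) (hu1 : u < 1) :
    ¬ ∃ q : Fin 2 → Fin 2 → Fin 2 → Fin 2 → Bool → ℝ,
      (∀ i j k l t, 0 ≤ q i j k l t) ∧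
      (∀ i j k l, q i j k l true + q i j k l false =
        (1 / 2) * (uco u i * uco u j * uco u k * uco u l
                    + vco u i * vco u j * vco u k * vco u l) ^ 2) ∧
      (∀ i, (∑ j, ∑ k, ∑ l, q i j k l true) = (vco u i) ^ 2 / 2) ∧
      (∀ i, (∑ j, ∑ k, ∑ l, q i j k l false) = (uco u i) ^ 2 / 2) ∧
      (∀ j, (∑ i, ∑ k, ∑ l, q i j k l true) = (vco u j) ^ 2 / 2) ∧
      (∀ j, (∑ i, ∑ k, ∑ l, q i j k l false) = (uco u j) ^ 2 / 2) ∧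
      (∀ k, (∑ i, ∑ j, ∑ l, q i j k l true) = (vco u k) ^ 2 / 2) ∧
      (∀ k, (∑ i, ∑ j, ∑ l, q i j k l false) = (uco u k) ^ 2 / 2) ∧
      (∀ l, (∑ i, ∑ j, ∑ k, q i j k l true) = (vco u l) ^ 2 / 2) ∧
      (∀ l, (∑ i, ∑ j, ∑ k, q i j k l false) = (uco u l) ^ 2 / 2) := by
  rintro ⟨q, hq, hP, h₁, -, h₂, -, h₃, -, h₄, -⟩
  have hv : Real.sqrt (1 - u ^ 2) ^ 2 = 1 - u ^ 2 := Real.sq_sqrt (by nlinarith)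
  have hle : ∀ i j k l, q i j k l true ≤
      (1 / 2) * (uco u i * uco u j * uco u k * uco u l
        + vco u i * vco u j * vco u k * vco u l) ^ 2 := fun i j k l => by
    linarith [hq i j k l false, hP i j k l]
  generalize hw : Real.sqrt (1 - u ^ 2) = v at hv
  have e₀ : uco u 0 = u := rfl
  have e₁ : uco u 1 = v := hw
  have f₀ : vco u 0 = v := hw
  have f₁ : vco u 1 = -u := rfl
  -- In terms of the number of indices equal to `1`, the first moment of the clockwise part is
  -- bounded by what the outcomes with at least three such indices can carry.
  have key : u ^ 2 - v ^ 2 ≤ (v ^ 4 + u ^ 4) ^ 2 + 2 * (u * v ^ 3 - v * u ^ 3) ^ 2 := by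
    have b₀ := hle 1 1 1 1
    have b₁ := hle 0 1 1 1
    have b₂ := hle 1 0 1 1
    have b₃ := hle 1 1 0 1
    have b₄ := hle 1 1 1 0
    have m₁ := h₁ 0
    have m₂ := h₂ 0
    have m₃ := h₃ 0
    have m₄ := h₄ 0
    have n₁ := h₁ 1
    have n₂ := h₂ 1
    have n₃ := h₃ 1
    have n₄ := h₄ 1
    simp only [Fin.sum_univ_two, e₀, e₁, f₀, f₁] at b₀ b₁ b₂ b₃ b₄ m₁ m₂ m₃ m₄ n₁ n₂ n₃ n₄
    linarith [hq 0 0 0 0 true, hq 1 0 0 0 true, hq 0 1 0 0 true, hq 0 0 1 0 true,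
      hq 0 0 0 1 true]
  have hv4 : (v ^ 4 + u ^ 4) ^ 2 + 2 * (u * v ^ 3 - v * u ^ 3) ^ 2 - (u ^ 2 - v ^ 2)
      = 2 * (1 - u ^ 2) ^ 2 * (1 - 2 * (u ^ 2) ^ 2) := by
    have h4 : (v ^ 4 + u ^ 4) ^ 2 + 2 * (u * v ^ 3 - v * u ^ 3) ^ 2 - (u ^ 2 - v ^ 2)
        = ((v ^ 2) ^ 2 + u ^ 4) ^ 2 + 2 * u ^ 2 * v ^ 2 * (v ^ 2 - u ^ 2) ^ 2
          - (u ^ 2 - v ^ 2) := by ring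
    rw [h4, hv]
    ring
  have hu2 : (0.7072 : ℝ) < u ^ 2 := by nlinarith
  have hpos : 0 < (1 - u ^ 2) ^ 2 := pow_pos (by nlinarith) 2
  nlinarith [mul_pos hpos (show 0 < 2 * (u ^ 2) ^ 2 - 1 by nlinarith)]
end

section
/- Let a triangle-network distribution P(a,b,c) have outputs a ∈ {0} ∪ {1_i : i ∈ I_A} ∪ {2}, b ∈ {0} ∪ {1_j : j ∈ I_B} ∪ {2}, c ∈ {0} ∪ {1_k : k ∈ I_C} ∪ {2} (I_A, I_B, I_C finite), and suppose: (1) P admits a local model on the triangle network, with independent hidden variables α, β, γ and response kernels p_A(a|β,γ), p_B(b|α,γ), p_C(c|α,β); and (2) the coarse-grained distribution P̃ obtained by mapping every 1_i to 1 equals the single-token TC distribution with parameters (p_α,p_β,p_γ) ∈ (0,1)³. Then there exist probability distributions q(i,j,k|cw) and q(i,j,k|acw) on I_A×I_B×I_C such that: q(i|cw) = P(1_i,2,0)/P̃(1,2,0), q(j|cw) = P(0,1_j,2)/P̃(0,1,2), q(k|cw) = P(2,0,1_k)/P̃(2,0,1), q(i|acw) = P(1_i,0,2)/P̃(1,0,2),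 q(j|acw) = P(2,1_j,0)/P̃(2,1,0), q(k|acw) = P(0,2,1_k)/P̃(0,2,1) (where q(i|t), q(j|t), q(k|t) denote the single-index marginals of q(·|t)), and for all (i,j,k): p_α p_β p_γ · q(i,j,k|cw) + (1−p_α)(1−p_β)(1−p_γ) · q(i,j,k|acw) = P(1_i,1_j,1_k). -/
open MeasureTheory

inductive TOut (I : Type) where
  | zero : TOut I
  | one : I → TOut I
  | two : TOut I
  deriving DecidableEq

instance {I : Type} [Fintype I] [DecidableEq I] : Fintype (TOut I) where
  elems := insert TOut.zero (insert TOut.two (Finset.univ.image TOut.one))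
  complete := by
    intro x
    cases x <;> simp

/-- Weight of a Bernoulli(`p`) variable. -/
noncomputable def bern (p : ℝ) (t : Bool) : ℝ := if t then p else 1 - p

/-- Number of tokens received by a party: `s` tokens from one source plus `1 - t`
from the other. -/
def tokOut (s t : Bool) : ℕ := (if s then 1 else 0) + (if t then 0 else 1)

/-- The single-token token-counting distribution on the triangle with parameters
`(pα, pβ, pγ)`: the distribution of `(ã, b̃, c̃)` with `ã = tβ + (1 - tγ)`,
`b̃ = tγ + (1 - tα)`, `c̃ = tα + (1 - tβ)` for independent Bernoulli `tα, tβ, tγ`. -/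
noncomputable def tcP (pα pβ pγ : ℝ) (x y z : ℕ) : ℝ :=
  ∑ tα : Bool, ∑ tβ : Bool, ∑ tγ : Bool,
    bern pα tα * bern pβ tβ * bern pγ tγ *
      (if x = tokOut tβ tγ ∧ y = tokOut tγ tα ∧ z = tokOut tα tβ then 1 else 0)

/-- Coarse graining `0 ↦ 0`, `1_i ↦ 1`, `2 ↦ 2`. -/
def cg {I : Type} : TOut I → ℕ
  | TOut.zero => 0
  | TOut.one _ => 1
  | TOut.two => 2

/-- Coarse-grained version of a triangle distribution. -/
noncomputable def cgP {IA IB IC : Type} [Fintype IA] [DecidableEq IA] [Fintype IB] [DecidableEq IB]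
    [Fintype IC] [DecidableEq IC]
    (P : TOut IA → TOut IB → TOut IC → ℝ) (x y z : ℕ) : ℝ :=
  ∑ a, ∑ b, ∑ c, if cg a = x ∧ cg b = y ∧ cg c = z then P a b c else 0

lemma TOut.sum_univ {I : Type} [Fintype I] [DecidableEq I] (f : TOut I → ℝ) :
    ∑ a, f a = f .zero + f .two + ∑ i, f (.one i) := by
  change ∑ a ∈ insert TOut.zero (insert TOut.two (Finset.univ.image TOut.one)), f a = _
  rw [Finset.sum_insert (by simp), Finset.sum_insert (by simp),
    Finset.sum_image (by intro x _ y _ h; simpa using h)]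
  ring

/-- The parameters of a token-counting distribution are determined by the distribution. -/
lemma tcP_injective {pα pβ pγ rα rβ rγ : ℝ}
    (hpα : pα ∈ Set.Ioo (0 : ℝ) 1) (hpβ : pβ ∈ Set.Ioo (0 : ℝ) 1) (hpγ : pγ ∈ Set.Ioo (0 : ℝ) 1)
    (h : ∀ x y z : ℕ, tcP rα rβ rγ x y z = tcP pα pβ pγ x y z) :
    rα = pα ∧ rβ = pβ ∧ rγ = pγ := by
  have h120 := h 1 2 0
  have h012 := h 0 1 2
  have h201 := h 2 0 1
  have h102 := h 1 0 2
  have h210 := h 2 1 0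
  have h021 := h 0 2 1
  simp [tcP, bern, tokOut] at h120 h012 h201 h102 h210 h021
  obtain ⟨hα0, hα1⟩ := hpα
  obtain ⟨hβ0, hβ1⟩ := hpβ
  obtain ⟨hγ0, hγ1⟩ := hpγ
  have cancel {K r p : ℝ} (hK : 0 < K) (hr : r * K = p * K) : r = p :=
    mul_right_cancel₀ hK.ne' hr
  refine ⟨cancel (mul_pos hβ0 (sub_pos.2 hγ1)) ?_, cancel (mul_pos hγ0 (sub_pos.2 hα1)) ?_,
    cancel (mul_pos hα0 (sub_pos.2 hβ1)) ?_⟩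
  · linear_combination (1 - rα) * h201 - rα * h210
  · linear_combination (1 - rβ) * h120 - rβ * h021
  · linear_combination (1 - rγ) * h012 - rγ * h102

/-- Token outputs always add up to the number of sources. -/
lemma tcP_eq_zero_of_sum_ne (pα pβ pγ : ℝ) {x y z : ℕ} (h : x + y + z ≠ 3) :
    tcP pα pβ pγ x y z = 0 := by
  unfold tcP
  refine Finset.sum_eq_zero fun tα _ => Finset.sum_eq_zero fun tβ _ =>
    Finset.sum_eq_zero fun tγ _ => ?_
  rw [if_neg, mul_zero]
  rintro ⟨rfl, rfl, rfl⟩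
  revert h
  cases tα <;> cases tβ <;> cases tγ <;> simp [tokOut]

section Discrete

variable {IA IB IC : Type}
    [Fintype IA] [DecidableEq IA] [Fintype IB] [DecidableEq IB] [Fintype IC] [DecidableEq IC]

/-- A decomposition of `P` according to the token configuration `(tα, tβ, tγ)`, in which the
outcome of each party is independent of the source it is not connected to. -/
structure TokenDecomposition (P : TOut IA → TOut IB → TOut IC → ℝ) where
  /-- The joint weight of a token configuration and an outcome. -/
  Q : Bool → Bool → Bool → TOut IA → TOut IB → TOut IC → ℝ
  /-- The probabilities of tokens equal to `true`. -/
  rα : ℝ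
  rβ : ℝ
  rγ : ℝ
  RA : Bool → Bool → TOut IA → ℝ
  RB : Bool → Bool → TOut IB → ℝ
  RC : Bool → Bool → TOut IC → ℝ
  nonneg : ∀ tα tβ tγ a b c, 0 ≤ Q tα tβ tγ a b c
  sum_config : ∀ a b c, P a b c = ∑ tα, ∑ tβ, ∑ tγ, Q tα tβ tγ a b c
  support : ∀ tα tβ tγ a b c,
    ¬(cg a = tokOut tβ tγ ∧ cg b = tokOut tγ tα ∧ cg c = tokOut tα tβ) → Q tα tβ tγ a b c = 0
  sum_outcome : ∀ tα tβ tγ,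
    ∑ a, ∑ b, ∑ c, Q tα tβ tγ a b c = bern rα tα * bern rβ tβ * bern rγ tγ
  margA : ∀ tα tβ tγ a, ∑ b, ∑ c, Q tα tβ tγ a b c = bern rα tα * RA tβ tγ a
  margB : ∀ tα tβ tγ b, ∑ a, ∑ c, Q tα tβ tγ a b c = bern rβ tβ * RB tα tγ b
  margC : ∀ tα tβ tγ c, ∑ a, ∑ b, Q tα tβ tγ a b c = bern rγ tγ * RC tα tβ c

lemma TokenDecomposition.cgP_eq {P : TOut IA → TOut IB → TOut IC → ℝ}
    (D : TokenDecomposition P) (x y z : ℕ) : cgP P x y z = tcP D.rα D.rβ D.rγ x y z := by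
  have key (tα tβ tγ : Bool) : (∑ a, ∑ b, ∑ c,
      if cg a = x ∧ cg b = y ∧ cg c = z then D.Q tα tβ tγ a b c else 0) =
      bern D.rα tα * bern D.rβ tβ * bern D.rγ tγ *
        (if x = tokOut tβ tγ ∧ y = tokOut tγ tα ∧ z = tokOut tα tβ then 1 else 0) := by
    rw [← D.sum_outcome]
    split_ifs with h
    · obtain ⟨rfl, rfl, rfl⟩ := h
      rw [mul_one]
      refine Finset.sum_congr rfl fun a _ => Finset.sum_congr rfl fun b _ =>
        Finset.sum_congr rfl fun c _ => ?_
      split_ifs with h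
      · rfl
      · exact (D.support _ _ _ _ _ _ h).symm
    · rw [mul_zero]
      refine Finset.sum_eq_zero fun a _ => Finset.sum_eq_zero fun b _ =>
        Finset.sum_eq_zero fun c _ => ?_
      split_ifs with h'
      · obtain ⟨rfl, rfl, rfl⟩ := h'
        exact D.support _ _ _ _ _ _ h
      · rfl
  unfold cgP tcP
  simp_rw [← key, D.sum_config]
  simp only [Fintype.sum_bool, ← Finset.sum_add_distrib]
  refine Finset.sum_congr rfl fun a _ => Finset.sum_congr rfl fun b _ =>
    Finset.sum_congr rfl fun c _ => ?_
  split_ifs <;> simp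

/-- The conclusion of the theorem follows from a token decomposition. -/
lemma TokenDecomposition.exists_conditionals {P : TOut IA → TOut IB → TOut IC → ℝ}
    (D : TokenDecomposition P) {pα pβ pγ : ℝ}
    (hpα : pα ∈ Set.Ioo (0 : ℝ) 1) (hpβ : pβ ∈ Set.Ioo (0 : ℝ) 1) (hpγ : pγ ∈ Set.Ioo (0 : ℝ) 1)
    (hTC : ∀ x y z : ℕ, cgP P x y z = tcP pα pβ pγ x y z) :
    ∃ qcw qacw : IA → IB → IC → ℝ,
      (∀ i j k, 0 ≤ qcw i j k) ∧ (∀ i j k, 0 ≤ qacw i j k) ∧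
      (∑ i, ∑ j, ∑ k, qcw i j k) = 1 ∧ (∑ i, ∑ j, ∑ k, qacw i j k) = 1 ∧
      (∀ i, (∑ j, ∑ k, qcw i j k) = P (TOut.one i) TOut.two TOut.zero / cgP P 1 2 0) ∧
      (∀ j, (∑ i, ∑ k, qcw i j k) = P TOut.zero (TOut.one j) TOut.two / cgP P 0 1 2) ∧
      (∀ k, (∑ i, ∑ j, qcw i j k) = P TOut.two TOut.zero (TOut.one k) / cgP P 2 0 1) ∧
      (∀ i, (∑ j, ∑ k, qacw i j k) = P (TOut.one i) TOut.zero TOut.two / cgP P 1 0 2) ∧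
      (∀ j, (∑ i, ∑ k, qacw i j k) = P TOut.two (TOut.one j) TOut.zero / cgP P 2 1 0) ∧
      (∀ k, (∑ i, ∑ j, qacw i j k) = P TOut.zero TOut.two (TOut.one k) / cgP P 0 2 1) ∧
      (∀ i j k, pα * pβ * pγ * qcw i j k
          + (1 - pα) * (1 - pβ) * (1 - pγ) * qacw i j k
          = P (TOut.one i) (TOut.one j) (TOut.one k)) := by
  obtain ⟨hrα, hrβ, hrγ⟩ := tcP_injective hpα hpβ hpγ fun x y z => by rw [← D.cgP_eq, hTC]
  obtain ⟨hα0, hα1⟩ := hpα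
  obtain ⟨hβ0, hβ1⟩ := hpβ
  obtain ⟨hγ0, hγ1⟩ := hpγ
  rw [← sub_pos] at hα1 hβ1 hγ1
  have hQ := D.support
  have hS := D.sum_outcome
  have hA := D.margA
  have hB := D.margB
  have hC := D.margC
  simp only [hrα, hrβ, hrγ] at hA hB hC hS
  refine ⟨fun i j k => D.Q true true true (.one i) (.one j) (.one k) / (pα * pβ * pγ),
    fun i j k => D.Q false false false (.one i) (.one j) (.one k) /
      ((1 - pα) * (1 - pβ) * (1 - pγ)),
    fun i j k => div_nonneg (D.nonneg ..) (by positivity),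
    fun i j k => div_nonneg (D.nonneg ..) (by positivity), ?_, ?_, ?_, ?_, ?_, ?_, ?_, ?_, ?_⟩
  · have h := hS true true true
    simp [TOut.sum_univ, hQ, cg, tokOut, bern] at h
    simp_rw [← Finset.sum_div, h]
    field_simp
  · have h := hS false false false
    simp [TOut.sum_univ, hQ, cg, tokOut, bern] at h
    simp_rw [← Finset.sum_div, h]
    field_simp
  · intro i
    have h := hA true true true (.one i)
    have h' := hA false true true (.one i)
    simp [TOut.sum_univ, hQ, cg, tokOut, bern] at h h'
    simp_rw [← Finset.sum_div, h, hTC, D.sum_config]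
    simp [tcP, hQ, cg, tokOut, bern, h']
    field_simp
  · intro j
    have h := hB true true true (.one j)
    have h' := hB true false true (.one j)
    simp [TOut.sum_univ, hQ, cg, tokOut, bern] at h h'
    simp_rw [← Finset.sum_div, h, hTC, D.sum_config]
    simp [tcP, hQ, cg, tokOut, bern, h']
    field_simp
  · intro k
    have h := hC true true true (.one k)
    have h' := hC true true false (.one k)
    simp [TOut.sum_univ, hQ, cg, tokOut, bern] at h h'
    simp_rw [← Finset.sum_div, h, hTC, D.sum_config]
    simp [tcP, hQ, cg, tokOut, bern, h']
    field_simp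
  · intro i
    have h := hA false false false (.one i)
    have h' := hA true false false (.one i)
    simp [TOut.sum_univ, hQ, cg, tokOut, bern] at h h'
    simp_rw [← Finset.sum_div, h, hTC, D.sum_config]
    simp [tcP, hQ, cg, tokOut, bern, h']
    field_simp
  · intro j
    have h := hB false false false (.one j)
    have h' := hB false true false (.one j)
    simp [TOut.sum_univ, hQ, cg, tokOut, bern] at h h'
    simp_rw [← Finset.sum_div, h, hTC, D.sum_config]
    simp [tcP, hQ, cg, tokOut, bern, h']
    field_simp
  · intro k
    have h := hC false false false (.one k)
    have h' := hC false false true (.one k)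
    simp [TOut.sum_univ, hQ, cg, tokOut, bern] at h h'
    simp_rw [← Finset.sum_div, h, hTC, D.sum_config]
    simp [tcP, hQ, cg, tokOut, bern, h']
    field_simp
  · intro i j k
    rw [D.sum_config]
    simp [hQ, cg, tokOut]
    field_simp

end Discrete

section Rigidity

variable {Λα Λβ Λγ : Type} [MeasurableSpace Λα] [MeasurableSpace Λβ] [MeasurableSpace Λγ]
    {μα : Measure Λα} {μβ : Measure Λβ} {μγ : Measure Λγ}
    [IsProbabilityMeasure μα] [IsProbabilityMeasure μβ] [IsProbabilityMeasure μγ]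

/-- Rigidity of token counting: deterministic strategies of the three parties whose outputs are
at most `2` and add up to `3`, with `(2, 0, 1)` and some `c = 0` both possible, count tokens. -/
lemma exists_tokens {a : Λβ → Λγ → ℕ} {b : Λα → Λγ → ℕ} {c : Λα → Λβ → ℕ}
    (ha : Measurable fun q : Λβ × Λγ => a q.1 q.2)
    (hb : Measurable fun q : Λα × Λγ => b q.1 q.2)
    (hG : ∀ᵐ ω ∂μα.prod (μβ.prod μγ), a ω.2.1 ω.2.2 ≤ 2 ∧ b ω.1 ω.2.2 ≤ 2 ∧ c ω.1 ω.2.1 ≤ 2 ∧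
      a ω.2.1 ω.2.2 + b ω.1 ω.2.2 + c ω.1 ω.2.1 = 3)
    (h201 : ∃ᵐ ω ∂μα.prod (μβ.prod μγ), a ω.2.1 ω.2.2 = 2 ∧ b ω.1 ω.2.2 = 0)
    (hc0 : ∃ᵐ ω ∂μα.prod (μβ.prod μγ), c ω.1 ω.2.1 = 0) :
    ∃ (tα : Λα → Bool) (tβ : Λβ → Bool) (tγ : Λγ → Bool),
      Measurable tα ∧ Measurable tβ ∧ Measurable tγ ∧
      ∀ᵐ ω ∂μα.prod (μβ.prod μγ), a ω.2.1 ω.2.2 = tokOut (tβ ω.2.1) (tγ ω.2.2) ∧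
        b ω.1 ω.2.2 = tokOut (tγ ω.2.2) (tα ω.1) ∧ c ω.1 ω.2.1 = tokOut (tα ω.1) (tβ ω.2.1) := by
  have qα : Measure.QuasiMeasurePreserving (fun ω : Λα × Λβ × Λγ => ω.1)
      (μα.prod (μβ.prod μγ)) μα := Measure.quasiMeasurePreserving_fst
  have qβγ : Measure.QuasiMeasurePreserving (fun ω : Λα × Λβ × Λγ => ω.2)
      (μα.prod (μβ.prod μγ)) (μβ.prod μγ) := Measure.quasiMeasurePreserving_snd
  have qβ : Measure.QuasiMeasurePreserving (fun ω : Λα × Λβ × Λγ => ω.2.1)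
      (μα.prod (μβ.prod μγ)) μβ := Measure.quasiMeasurePreserving_fst.comp qβγ
  have qγ : Measure.QuasiMeasurePreserving (fun ω : Λα × Λβ × Λγ => ω.2.2)
      (μα.prod (μβ.prod μγ)) μγ := Measure.quasiMeasurePreserving_snd.comp qβγ
  have qαβ : Measure.QuasiMeasurePreserving (fun ω : Λα × Λβ × Λγ => (ω.1, ω.2.1))
      (μα.prod (μβ.prod μγ)) (μα.prod μβ) :=
    ((MeasurePreserving.id μα).prod measurePreserving_fst).quasiMeasurePreserving
  have qαγ : Measure.QuasiMeasurePreserving (fun ω : Λα × Λβ × Λγ => (ω.1, ω.2.2))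
      (μα.prod (μβ.prod μγ)) (μα.prod μγ) :=
    ((MeasurePreserving.id μα).prod measurePreserving_snd).quasiMeasurePreserving
  have eγ : Measure.QuasiMeasurePreserving (fun p : Λγ × Λα × Λβ => (p.2.1, p.2.2, p.1))
      (μγ.prod (μα.prod μβ)) (μα.prod (μβ.prod μγ)) :=
    ((measurePreserving_prodAssoc μα μβ μγ).comp
      Measure.measurePreserving_swap).quasiMeasurePreserving
  have eβ : Measure.QuasiMeasurePreserving (fun p : (Λα × Λγ) × Λβ => (p.1.1, p.2, p.1.2))
      ((μα.prod μγ).prod μβ) (μα.prod (μβ.prod μγ)) :=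
    (((MeasurePreserving.id μα).prod Measure.measurePreserving_swap).comp
      (measurePreserving_prodAssoc μα μγ μβ)).quasiMeasurePreserving
  have eα : Measure.QuasiMeasurePreserving (fun p : (Λβ × Λγ) × Λα => (p.2, p.1.1, p.1.2))
      ((μβ.prod μγ).prod μα) (μα.prod (μβ.prod μγ)) :=
    Measure.measurePreserving_swap.quasiMeasurePreserving
  obtain ⟨⟨α₀, β₀, γ₀⟩, ⟨ha₀, hb₀⟩, hα₀, hγ₀, hα₀γ₀, hβ₀γ₀⟩ := (h201.and_eventually <|
    (qα.ae (Measure.ae_ae_of_ae_prod hG)).and <|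
    (qγ.ae (Measure.ae_ae_of_ae_prod (eγ.ae hG))).and <|
    (qαγ.ae (Measure.ae_ae_of_ae_prod (eβ.ae hG))).and <|
    (qβγ.ae (Measure.ae_ae_of_ae_prod (eα.ae hG)))).exists
  dsimp only at ha₀ hb₀ hα₀ hγ₀ hα₀γ₀ hβ₀γ₀
  obtain ⟨⟨α₁, β₁, γ₁⟩, hc₁, hα₁, hα₁γ₀, hγ₀α₁β₁, hα₀γ₀β₁, hβ₀γ₀α₁⟩ := (hc0.and_eventually <|
    (qα.ae (Measure.ae_ae_of_ae_prod hG)).and <|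
    (qα.ae (Measure.ae_ae_of_ae_prod hγ₀)).and <|
    (qαβ.ae hγ₀).and <| (qβ.ae hα₀γ₀).and (qα.ae hβ₀γ₀)).exists
  dsimp only at hc₁ hα₁ hα₁γ₀ hγ₀α₁β₁ hα₀γ₀β₁ hβ₀γ₀α₁
  refine ⟨fun α => decide (b α γ₀ = 0), fun β => decide (a β γ₀ = 2),
    fun γ => decide (b α₀ γ = 1), ?_, ?_, ?_, ?_⟩
  · exact (measurable_of_countable (fun n : ℕ => decide (n = 0))).comp
      (hb.comp measurable_prodMk_right)
  · exact (measurable_of_countable (fun n : ℕ => decide (n = 2))).comp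
      (ha.comp measurable_prodMk_right)
  · exact (measurable_of_countable (fun n : ℕ => decide (n = 1))).comp
      (hb.comp measurable_prodMk_left)
  · filter_upwards [hG, qβγ.ae hα₀, qαβ.ae hγ₀, qβ.ae hα₀γ₀, qα.ae hβ₀γ₀, qβγ.ae hα₁, qβ.ae hα₁γ₀]
      with ⟨α, β, γ⟩ h₁ h₂ h₃ h₄ h₅ h₆ h₇
    dsimp only at *
    simp only [tokOut, decide_eq_true_eq]
    refine ⟨?_, ?_, ?_⟩ <;> split_ifs <;> omega

end Rigidity

lemma cg_le_two {I : Type} (a : TOut I) : cg a ≤ 2 := by cases a <;> simp [cg]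

section Determinism

variable {I J K : Type} [Fintype I] [DecidableEq I] [Fintype J] [DecidableEq J]
    [Fintype K] [DecidableEq K]

/-- The mean coarse-grained outcome of `f`, rounded down to a natural number. -/
noncomputable def meanOut (f : TOut I → ℝ) : ℕ := ⌊∑ a, (cg a : ℝ) * f a⌋₊

lemma meanOut_eq {f : TOut I → ℝ} (hf : ∑ a, f a = 1) {n : ℕ} (h : ∀ a, f a ≠ 0 → cg a = n) :
    meanOut f = n := by
  have : ∑ a, (cg a : ℝ) * f a = n := by
    rw [← mul_one (n : ℝ), ← hf, Finset.mul_sum]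
    refine Finset.sum_congr rfl fun a _ => ?_
    by_cases ha : f a = 0
    · simp [ha]
    · rw [h a ha]
  rw [meanOut, this, Nat.floor_natCast]

/-- Independent outcomes whose coarse-grained values always add up to `3` have deterministic
coarse-grained values. -/
lemma meanOut_deterministic {f : TOut I → ℝ} {g : TOut J → ℝ} {h : TOut K → ℝ}
    (hf : ∑ a, f a = 1) (hg : ∑ b, g b = 1) (hh : ∑ c, h c = 1)
    (H : ∀ a b c, f a * g b * h c ≠ 0 → cg a + cg b + cg c = 3) :
    ((∀ a, f a ≠ 0 → cg a = meanOut f) ∧ (∀ b, g b ≠ 0 → cg b = meanOut g) ∧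
      ∀ c, h c ≠ 0 → cg c = meanOut h) ∧
    meanOut f ≤ 2 ∧ meanOut g ≤ 2 ∧ meanOut h ≤ 2 ∧ meanOut f + meanOut g + meanOut h = 3 := by
  obtain ⟨a₀, -, ha₀⟩ := Finset.exists_ne_zero_of_sum_ne_zero (hf.trans_ne one_ne_zero)
  obtain ⟨b₀, -, hb₀⟩ := Finset.exists_ne_zero_of_sum_ne_zero (hg.trans_ne one_ne_zero)
  obtain ⟨c₀, -, hc₀⟩ := Finset.exists_ne_zero_of_sum_ne_zero (hh.trans_ne one_ne_zero)
  have h₀ := H a₀ b₀ c₀ (by positivity)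
  have hA : ∀ a, f a ≠ 0 → cg a = cg a₀ := fun a ha => by
    have := H a b₀ c₀ (by positivity)
    omega
  have hB : ∀ b, g b ≠ 0 → cg b = cg b₀ := fun b hb => by
    have := H a₀ b c₀ (by positivity)
    omega
  have hC : ∀ c, h c ≠ 0 → cg c = cg c₀ := fun c hc => by
    have := H a₀ b₀ c (by positivity)
    omega
  rw [meanOut_eq hf hA, meanOut_eq hg hB, meanOut_eq hh hC]
  exact ⟨⟨hA, hB, hC⟩, cg_le_two _, cg_le_two _, cg_le_two _, h₀⟩

end Determinism

section Model

/-- Indicator that a token takes a given value. -/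
noncomputable def tokInd (t s : Bool) : ℝ := if t = s then 1 else 0

lemma tokInd_mem (t s : Bool) : tokInd t s ∈ Set.Icc (0 : ℝ) 1 := by
  unfold tokInd
  split_ifs <;> simp

lemma mul_mem_unitInterval {x y : ℝ} (hx : x ∈ Set.Icc (0 : ℝ) 1) (hy : y ∈ Set.Icc (0 : ℝ) 1) :
    x * y ∈ Set.Icc (0 : ℝ) 1 :=
  ⟨mul_nonneg hx.1 hy.1, mul_le_one₀ hx.2 hy.1 hy.2⟩

variable {Λα Λβ Λγ : Type} [MeasurableSpace Λα] [MeasurableSpace Λβ] [MeasurableSpace Λγ]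
    {μα : Measure Λα} {μβ : Measure Λβ} {μγ : Measure Λγ}
    [IsProbabilityMeasure μα] [IsProbabilityMeasure μβ] [IsProbabilityMeasure μγ]

lemma sum_sum_integral {Ω ι κ : Type*} [MeasurableSpace Ω] {μ : Measure Ω} [Fintype ι] [Fintype κ]
    {F : ι → κ → Ω → ℝ} (hF : ∀ i j, Integrable (F i j) μ) :
    ∑ i, ∑ j, ∫ ω, F i j ω ∂μ = ∫ ω, ∑ i, ∑ j, F i j ω ∂μ := by
  rw [integral_finsetSum _ fun i _ => integrable_finsetSum _ fun j _ => hF i j]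
  exact Finset.sum_congr rfl fun i _ => (integral_finsetSum _ fun j _ => hF i j).symm

lemma sum_sum_sum_integral {Ω ι κ τ : Type*} [MeasurableSpace Ω] {μ : Measure Ω} [Fintype ι]
    [Fintype κ] [Fintype τ] {F : ι → κ → τ → Ω → ℝ} (hF : ∀ i j k, Integrable (F i j k) μ) :
    ∑ i, ∑ j, ∑ k, ∫ ω, F i j k ω ∂μ = ∫ ω, ∑ i, ∑ j, ∑ k, F i j k ω ∂μ := by
  rw [integral_finsetSum _ fun i _ => integrable_finsetSum _ fun j _ =>
    integrable_finsetSum _ fun k _ => hF i j k]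
  exact Finset.sum_congr rfl fun i _ => sum_sum_integral (hF i)

lemma integral_tokInd {t : Λα → Bool} (ht : Measurable t) (s : Bool) :
    ∫ x, tokInd (t x) s ∂μα = bern (∫ x, tokInd (t x) true ∂μα) s := by
  cases s
  · have hm : Measurable fun x => tokInd (t x) true :=
      (measurable_of_countable fun b => tokInd b true).comp ht
    have h : ∀ x, tokInd (t x) false = 1 - tokInd (t x) true := fun x => by
      cases t x <;> simp [tokInd]
    simp_rw [h]
    rw [integral_sub (integrable_const _)
      (Integrable.of_mem_Icc 0 1 hm.aemeasurable (ae_of_all _ fun x => tokInd_mem _ _))]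
    simp [bern]
  · simp [bern]

lemma integral_prod_prod {F : Λα → Λβ → Λγ → ℝ}
    (hF : Measurable fun ω : Λα × Λβ × Λγ => F ω.1 ω.2.1 ω.2.2)
    (hF1 : ∀ α β γ, F α β γ ∈ Set.Icc (0 : ℝ) 1) :
    ∫ ω, F ω.1 ω.2.1 ω.2.2 ∂μα.prod (μβ.prod μγ) =
      ∫ α, ∫ β, ∫ γ, F α β γ ∂μγ ∂μβ ∂μα := by
  rw [integral_prod _ (Integrable.of_mem_Icc 0 1 hF.aemeasurable (ae_of_all _ fun _ => hF1 ..))]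
  congr with α
  exact integral_prod _ (Integrable.of_mem_Icc 0 1
    (hF.comp measurable_prodMk_left).aemeasurable (ae_of_all _ fun _ => hF1 ..))

variable {IA IB IC : Type}
    [Fintype IA] [DecidableEq IA] [Fintype IB] [DecidableEq IB] [Fintype IC] [DecidableEq IC]
    {pA : TOut IA → Λβ → Λγ → ℝ} {pB : TOut IB → Λα → Λγ → ℝ} {pC : TOut IC → Λα → Λβ → ℝ}
    {P : TOut IA → TOut IB → TOut IC → ℝ}

lemma apply_mem_unitInterval {I : Type} [Fintype I] {f : I → ℝ}
    (hf : (∀ a, 0 ≤ f a) ∧ ∑ a, f a = 1) (a : I) : f a ∈ Set.Icc (0 : ℝ) 1 :=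
  ⟨hf.1 a, hf.2 ▸ Finset.single_le_sum (fun b _ => hf.1 b) (Finset.mem_univ a)⟩

/-- A local model whose coarse-grained outcomes count tokens yields a token decomposition. -/
lemma nonempty_tokenDecomposition
    (hmA : ∀ a, Measurable fun q : Λβ × Λγ => pA a q.1 q.2)
    (hmB : ∀ b, Measurable fun q : Λα × Λγ => pB b q.1 q.2)
    (hmC : ∀ c, Measurable fun q : Λα × Λβ => pC c q.1 q.2)
    (hA : ∀ x y, (∀ a, 0 ≤ pA a x y) ∧ ∑ a, pA a x y = 1)
    (hB : ∀ x y, (∀ b, 0 ≤ pB b x y) ∧ ∑ b, pB b x y = 1)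
    (hC : ∀ x y, (∀ c, 0 ≤ pC c x y) ∧ ∑ c, pC c x y = 1)
    (hP : ∀ a b c, P a b c = ∫ ω, pA a ω.2.1 ω.2.2 * pB b ω.1 ω.2.2 * pC c ω.1 ω.2.1
      ∂μα.prod (μβ.prod μγ))
    {tα : Λα → Bool} {tβ : Λβ → Bool} {tγ : Λγ → Bool}
    (htα : Measurable tα) (htβ : Measurable tβ) (htγ : Measurable tγ)
    (ht : ∀ᵐ ω ∂μα.prod (μβ.prod μγ),
      (∀ a, pA a ω.2.1 ω.2.2 ≠ 0 → cg a = tokOut (tβ ω.2.1) (tγ ω.2.2)) ∧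
      (∀ b, pB b ω.1 ω.2.2 ≠ 0 → cg b = tokOut (tγ ω.2.2) (tα ω.1)) ∧
      ∀ c, pC c ω.1 ω.2.1 ≠ 0 → cg c = tokOut (tα ω.1) (tβ ω.2.1)) :
    Nonempty (TokenDecomposition P) := by
  have mA (a) : Measurable fun ω : Λα × Λβ × Λγ => pA a ω.2.1 ω.2.2 :=
    (hmA a).comp measurable_snd
  have mB (b) : Measurable fun ω : Λα × Λβ × Λγ => pB b ω.1 ω.2.2 :=
    (hmB b).comp (measurable_fst.prodMk measurable_snd.snd)
  have mC (c) : Measurable fun ω : Λα × Λβ × Λγ => pC c ω.1 ω.2.1 :=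
    (hmC c).comp (measurable_fst.prodMk measurable_snd.fst)
  have mα (s) : Measurable fun ω : Λα × Λβ × Λγ => tokInd (tα ω.1) s :=
    (measurable_of_countable fun b => tokInd b s).comp (htα.comp measurable_fst)
  have mβ (s) : Measurable fun ω : Λα × Λβ × Λγ => tokInd (tβ ω.2.1) s :=
    (measurable_of_countable fun b => tokInd b s).comp (htβ.comp measurable_snd.fst)
  have mγ (s) : Measurable fun ω : Λα × Λβ × Λγ => tokInd (tγ ω.2.2) s :=
    (measurable_of_countable fun b => tokInd b s).comp (htγ.comp measurable_snd.snd)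
  have uA (a β γ) := apply_mem_unitInterval (hA β γ) a
  have uB (b α γ) := apply_mem_unitInterval (hB α γ) b
  have uC (c α β) := apply_mem_unitInterval (hC α β) c
  have int (sα sβ sγ a b c) : Integrable (fun ω : Λα × Λβ × Λγ =>
      tokInd (tα ω.1) sα * tokInd (tβ ω.2.1) sβ * tokInd (tγ ω.2.2) sγ *
        (pA a ω.2.1 ω.2.2 * pB b ω.1 ω.2.2 * pC c ω.1 ω.2.1)) (μα.prod (μβ.prod μγ)) :=
    Integrable.of_mem_Icc 0 1
      ((((mα sα).mul (mβ sβ)).mul (mγ sγ)).mul (((mA a).mul (mB b)).mul (mC c))).aemeasurable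
      (ae_of_all _ fun ω => mul_mem_unitInterval
        (mul_mem_unitInterval (mul_mem_unitInterval (tokInd_mem ..) (tokInd_mem ..))
          (tokInd_mem ..))
        (mul_mem_unitInterval (mul_mem_unitInterval (uA ..) (uB ..)) (uC ..)))
  refine ⟨{
    Q := fun sα sβ sγ a b c => ∫ ω, tokInd (tα ω.1) sα * tokInd (tβ ω.2.1) sβ *
      tokInd (tγ ω.2.2) sγ * (pA a ω.2.1 ω.2.2 * pB b ω.1 ω.2.2 * pC c ω.1 ω.2.1)
      ∂μα.prod (μβ.prod μγ)
    rα := ∫ α, tokInd (tα α) true ∂μα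
    rβ := ∫ β, tokInd (tβ β) true ∂μβ
    rγ := ∫ γ, tokInd (tγ γ) true ∂μγ
    RA := fun sβ sγ a => ∫ β, ∫ γ, tokInd (tβ β) sβ * tokInd (tγ γ) sγ * pA a β γ ∂μγ ∂μβ
    RB := fun sα sγ b => ∫ α, ∫ γ, tokInd (tα α) sα * tokInd (tγ γ) sγ * pB b α γ ∂μγ ∂μα
    RC := fun sα sβ c => ∫ α, ∫ β, tokInd (tα α) sα * tokInd (tβ β) sβ * pC c α β ∂μβ ∂μα
    nonneg := ?_
    sum_config := ?_
    support := ?_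
    sum_outcome := ?_
    margA := ?_
    margB := ?_
    margC := ?_ }⟩
  · intro sα sβ sγ a b c
    refine integral_nonneg fun ω => ?_
    have := (tokInd_mem (tα ω.1) sα).1
    have := (tokInd_mem (tβ ω.2.1) sβ).1
    have := (tokInd_mem (tγ ω.2.2) sγ).1
    have := (uA a ω.2.1 ω.2.2).1
    have := (uB b ω.1 ω.2.2).1
    have := (uC c ω.1 ω.2.1).1
    dsimp only [Pi.zero_apply]
    positivity
  · intro a b c
    rw [hP, sum_sum_sum_integral fun sα sβ sγ => int sα sβ sγ a b c]
    refine integral_congr_ae (ae_of_all _ fun ω => ?_)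
    simp only [Fintype.sum_bool]
    cases tα ω.1 <;> cases tβ ω.2.1 <;> cases tγ ω.2.2 <;> simp [tokInd]
  · intro sα sβ sγ a b c h
    refine integral_eq_zero_of_ae ?_
    filter_upwards [ht] with ω ⟨h₁, h₂, h₃⟩
    by_contra h0
    refine h ?_
    simp only [Pi.zero_apply, mul_eq_zero, not_or, tokInd, ite_eq_right_iff, one_ne_zero,
      imp_false, not_not] at h0
    obtain ⟨⟨⟨rfl, rfl⟩, rfl⟩, ⟨ha, hb⟩, hc⟩ := h0
    exact ⟨h₁ a ha, h₂ b hb, h₃ c hc⟩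
  · intro sα sβ sγ
    rw [sum_sum_sum_integral fun a b c => int sα sβ sγ a b c]
    simp_rw [← Finset.mul_sum, ← Finset.sum_mul, hC, mul_one, ← Finset.mul_sum, hB, mul_one, hA,
      mul_one]
    rw [integral_prod_prod (F := fun α β γ => tokInd (tα α) sα * tokInd (tβ β) sβ *
      tokInd (tγ γ) sγ) (((mα sα).mul (mβ sβ)).mul (mγ sγ)) fun α β γ =>
        mul_mem_unitInterval (mul_mem_unitInterval (tokInd_mem ..) (tokInd_mem ..))
          (tokInd_mem ..)]
    simp_rw [integral_const_mul, integral_mul_const, integral_const_mul, integral_mul_const,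
      integral_tokInd htα sα, integral_tokInd htβ sβ, integral_tokInd htγ sγ]
  · intro sα sβ sγ a
    rw [sum_sum_integral fun b c => int sα sβ sγ a b c]
    simp_rw [← Finset.mul_sum, hC, mul_one, ← Finset.mul_sum, hB, mul_one, mul_assoc]
    rw [integral_prod_prod (F := fun α β γ => tokInd (tα α) sα * (tokInd (tβ β) sβ *
      (tokInd (tγ γ) sγ * pA a β γ))) ((mα sα).mul ((mβ sβ).mul ((mγ sγ).mul (mA a))))
      fun α β γ => mul_mem_unitInterval (tokInd_mem ..) (mul_mem_unitInterval (tokInd_mem ..)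
        (mul_mem_unitInterval (tokInd_mem ..) (uA ..)))]
    simp_rw [integral_const_mul, integral_mul_const, integral_tokInd htα sα]
  · intro sα sβ sγ b
    rw [sum_sum_integral fun a c => int sα sβ sγ a b c]
    simp_rw [← Finset.mul_sum, hC, mul_one, ← Finset.sum_mul, hA, one_mul,
      mul_assoc, mul_left_comm (tokInd (tα _) _) (tokInd (tβ _) _)]
    rw [integral_prod_prod (F := fun α β γ => tokInd (tβ β) sβ * (tokInd (tα α) sα *
      (tokInd (tγ γ) sγ * pB b α γ))) ((mβ sβ).mul ((mα sα).mul ((mγ sγ).mul (mB b))))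
      fun α β γ => mul_mem_unitInterval (tokInd_mem ..) (mul_mem_unitInterval (tokInd_mem ..)
        (mul_mem_unitInterval (tokInd_mem ..) (uB ..)))]
    simp_rw [integral_const_mul, integral_mul_const, integral_const_mul, integral_tokInd htβ sβ]
  · intro sα sβ sγ c
    rw [sum_sum_integral fun a b => int sα sβ sγ a b c]
    simp_rw [← Finset.mul_sum, ← Finset.sum_mul, ← Finset.mul_sum, hB, mul_one, hA, one_mul,
      mul_right_comm _ (tokInd (tγ _) _)]
    rw [integral_prod_prod (F := fun α β γ => tokInd (tα α) sα * tokInd (tβ β) sβ * pC c α β *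
      tokInd (tγ γ) sγ) ((((mα sα).mul (mβ sβ)).mul (mC c)).mul (mγ sγ))
      fun α β γ => mul_mem_unitInterval (mul_mem_unitInterval (mul_mem_unitInterval
        (tokInd_mem ..) (tokInd_mem ..)) (uC ..)) (tokInd_mem ..)]
    simp_rw [integral_const_mul, integral_mul_const, mul_comm (bern _ _),
      integral_tokInd htγ sγ]

end Model

/-- if a triangle distribution `P` admits a local model and its
coarse-graining is the single-token TC distribution with parameters
`(pα, pβ, pγ) ∈ (0,1)³`, then there exist conditional distributions
`q(·|cw)`, `q(·|acw)` with the stated marginal and mixture properties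
(`cw` is encoded by `true`, `acw` by `false`). -/
theorem stmt_4 {IA IB IC : Type}
    [Fintype IA] [DecidableEq IA] [Fintype IB] [DecidableEq IB] [Fintype IC] [DecidableEq IC]
    {Λα Λβ Λγ : Type}
    [MeasurableSpace Λα] [MeasurableSpace Λβ] [MeasurableSpace Λγ]
    (μα : Measure Λα) (μβ : Measure Λβ) (μγ : Measure Λγ)
    [IsProbabilityMeasure μα] [IsProbabilityMeasure μβ] [IsProbabilityMeasure μγ]
    (pA : TOut IA → Λβ → Λγ → ℝ) (pB : TOut IB → Λα → Λγ → ℝ) (pC : TOut IC → Λα → Λβ → ℝ)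
    (hmA : ∀ a, Measurable fun q : Λβ × Λγ => pA a q.1 q.2)
    (hmB : ∀ b, Measurable fun q : Λα × Λγ => pB b q.1 q.2)
    (hmC : ∀ c, Measurable fun q : Λα × Λβ => pC c q.1 q.2)
    (hA : ∀ x y, (∀ a, 0 ≤ pA a x y) ∧ ∑ a, pA a x y = 1)
    (hB : ∀ x y, (∀ b, 0 ≤ pB b x y) ∧ ∑ b, pB b x y = 1)
    (hC : ∀ x y, (∀ c, 0 ≤ pC c x y) ∧ ∑ c, pC c x y = 1)
    (P : TOut IA → TOut IB → TOut IC → ℝ)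
    (hP : ∀ a b c, P a b c =
      ∫ xα, ∫ xβ, ∫ xγ, pA a xβ xγ * pB b xα xγ * pC c xα xβ ∂μγ ∂μβ ∂μα)
    (pα pβ pγ : ℝ)
    (hpα : pα ∈ Set.Ioo (0:ℝ) 1) (hpβ : pβ ∈ Set.Ioo (0:ℝ) 1) (hpγ : pγ ∈ Set.Ioo (0:ℝ) 1)
    (hTC : ∀ x y z : ℕ, cgP P x y z = tcP pα pβ pγ x y z) :
    ∃ qcw qacw : IA → IB → IC → ℝ,
      (∀ i j k, 0 ≤ qcw i j k) ∧ (∀ i j k, 0 ≤ qacw i j k) ∧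
      (∑ i, ∑ j, ∑ k, qcw i j k) = 1 ∧ (∑ i, ∑ j, ∑ k, qacw i j k) = 1 ∧
      (∀ i, (∑ j, ∑ k, qcw i j k) = P (TOut.one i) TOut.two TOut.zero / cgP P 1 2 0) ∧
      (∀ j, (∑ i, ∑ k, qcw i j k) = P TOut.zero (TOut.one j) TOut.two / cgP P 0 1 2) ∧
      (∀ k, (∑ i, ∑ j, qcw i j k) = P TOut.two TOut.zero (TOut.one k) / cgP P 2 0 1) ∧
      (∀ i, (∑ j, ∑ k, qacw i j k) = P (TOut.one i) TOut.zero TOut.two / cgP P 1 0 2) ∧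
      (∀ j, (∑ i, ∑ k, qacw i j k) = P TOut.two (TOut.one j) TOut.zero / cgP P 2 1 0) ∧
      (∀ k, (∑ i, ∑ j, qacw i j k) = P TOut.zero TOut.two (TOut.one k) / cgP P 0 2 1) ∧
      (∀ i j k, pα * pβ * pγ * qcw i j k
          + (1 - pα) * (1 - pβ) * (1 - pγ) * qacw i j k
          = P (TOut.one i) (TOut.one j) (TOut.one k)) := by
  have uA (a β γ) := apply_mem_unitInterval (hA β γ) a
  have uB (b α γ) := apply_mem_unitInterval (hB α γ) b
  have uC (c α β) := apply_mem_unitInterval (hC α β) c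
  have m (a b c) : Measurable fun ω : Λα × Λβ × Λγ =>
      pA a ω.2.1 ω.2.2 * pB b ω.1 ω.2.2 * pC c ω.1 ω.2.1 :=
    (((hmA a).comp measurable_snd).mul
      ((hmB b).comp (measurable_fst.prodMk measurable_snd.snd))).mul
      ((hmC c).comp (measurable_fst.prodMk measurable_snd.fst))
  have u (a b c α β γ) : pA a β γ * pB b α γ * pC c α β ∈ Set.Icc (0 : ℝ) 1 :=
    mul_mem_unitInterval (mul_mem_unitInterval (uA ..) (uB ..)) (uC ..)
  have hP' (a b c) : P a b c = ∫ ω, pA a ω.2.1 ω.2.2 * pB b ω.1 ω.2.2 * pC c ω.1 ω.2.1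
      ∂μα.prod (μβ.prod μγ) := by
    rw [hP, ← integral_prod_prod (m a b c) (u a b c)]
  have hP0 (a b c) : 0 ≤ P a b c := by
    rw [hP']
    exact integral_nonneg fun ω => (u ..).1
  have hPsum (a b c) (h : cg a + cg b + cg c ≠ 3) : P a b c = 0 := by
    have hz := (hTC (cg a) (cg b) (cg c)).trans (tcP_eq_zero_of_sum_ne pα pβ pγ h)
    refine le_antisymm ?_ (hP0 a b c)
    have hn (a₁ b₁ c₁) :
        0 ≤ if cg a₁ = cg a ∧ cg b₁ = cg b ∧ cg c₁ = cg c then P a₁ b₁ c₁ else 0 := by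
      split_ifs
      exacts [hP0 .., le_rfl]
    rw [← hz, cgP]
    refine le_trans ?_ (Finset.single_le_sum (fun a₁ _ => Finset.sum_nonneg fun b₁ _ =>
      Finset.sum_nonneg fun c₁ _ => hn a₁ b₁ c₁) (Finset.mem_univ a))
    refine le_trans ?_ (Finset.single_le_sum (fun b₁ _ => Finset.sum_nonneg fun c₁ _ =>
      hn a b₁ c₁) (Finset.mem_univ b))
    refine le_trans ?_ (Finset.single_le_sum (fun c₁ _ => hn a b c₁) (Finset.mem_univ c))
    simp
  have hsupp : ∀ᵐ ω ∂μα.prod (μβ.prod μγ), ∀ a b c,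
      pA a ω.2.1 ω.2.2 * pB b ω.1 ω.2.2 * pC c ω.1 ω.2.1 ≠ 0 → cg a + cg b + cg c = 3 := by
    simp only [ae_all_iff]
    intro a b c
    by_cases h : cg a + cg b + cg c = 3
    · exact ae_of_all _ fun _ _ => h
    · have h0 := hPsum a b c h
      rw [hP', integral_eq_zero_iff_of_nonneg (fun ω => (u ..).1) (Integrable.of_mem_Icc 0 1
        (m a b c).aemeasurable (ae_of_all _ fun ω => u ..))] at h0
      filter_upwards [h0] with ω hω hne
      exact absurd hω hne
  have hdet := hsupp.mono fun ω hω =>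
    meanOut_deterministic (hA ω.2.1 ω.2.2).2 (hB ω.1 ω.2.2).2 (hC ω.1 ω.2.1).2 hω
  have hfreq (x y z : ℕ) (h : cgP P x y z ≠ 0) : ∃ᵐ ω ∂μα.prod (μβ.prod μγ),
      meanOut (fun a => pA a ω.2.1 ω.2.2) = x ∧ meanOut (fun b => pB b ω.1 ω.2.2) = y ∧
        meanOut (fun c => pC c ω.1 ω.2.1) = z := by
    obtain ⟨a, -, h⟩ := Finset.exists_ne_zero_of_sum_ne_zero h
    obtain ⟨b, -, h⟩ := Finset.exists_ne_zero_of_sum_ne_zero h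
    obtain ⟨c, -, h⟩ := Finset.exists_ne_zero_of_sum_ne_zero h
    obtain ⟨⟨rfl, rfl, rfl⟩, hne0⟩ := ite_ne_right_iff.1 h
    rw [hP'] at hne0
    have hne : ∃ᵐ ω ∂μα.prod (μβ.prod μγ),
        pA a ω.2.1 ω.2.2 * pB b ω.1 ω.2.2 * pC c ω.1 ω.2.1 ≠ 0 := fun h0 =>
      hne0 (integral_eq_zero_of_ae (h0.mono fun ω hω => not_not.1 hω))
    refine (hne.and_eventually hdet).mono fun ω ⟨hω, ⟨h₁, h₂, h₃⟩, _⟩ => ?_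
    simp only [ne_eq, mul_eq_zero, not_or] at hω
    exact ⟨(h₁ a hω.1.1).symm, (h₂ b hω.1.2).symm, (h₃ c hω.2).symm⟩
  have hmean {Ω I : Type} [MeasurableSpace Ω] [Fintype I] [DecidableEq I] {f : TOut I → Ω → ℝ}
      (hf : ∀ a, Measurable (f a)) : Measurable fun ω => meanOut fun a => f a ω :=
    Nat.measurable_floor.comp (Finset.measurable_sum _ fun a _ => (hf a).const_mul _)
  have hα := sub_pos.2 hpα.2
  have hγ := sub_pos.2 hpγ.2
  obtain ⟨tα, tβ, tγ, htα, htβ, htγ, ht⟩ := exists_tokens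
    (a := fun β γ => meanOut fun a => pA a β γ) (b := fun α γ => meanOut fun b => pB b α γ)
    (c := fun α β => meanOut fun c => pC c α β) (hmean hmA) (hmean hmB)
    (hdet.mono fun ω hω => hω.2)
    ((hfreq 2 0 1 (by
      rw [hTC]
      simp [tcP, bern, tokOut, hpα.1.ne', hpβ.1.ne', hγ.ne'])).mono fun ω hω => ⟨hω.1, hω.2.1⟩)
    ((hfreq 2 1 0 (by
      rw [hTC]
      simp [tcP, bern, tokOut, hα.ne', hpβ.1.ne', hγ.ne'])).mono fun ω hω => hω.2.2)
  obtain ⟨D⟩ := nonempty_tokenDecomposition hmA hmB hmC hA hB hC hP' htα htβ htγ (by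
    filter_upwards [hdet, ht] with ω ⟨⟨h₁, h₂, h₃⟩, _⟩ ⟨g₁, g₂, g₃⟩
    exact ⟨fun a ha => (h₁ a ha).trans g₁, fun b hb => (h₂ b hb).trans g₂,
      fun c hc => (h₃ c hc).trans g₃⟩)
  exact D.exists_conditionals hpα hpβ hpγ hTC
end

section
/- Token-counting rigidity on the triangle: let α, β, γ be independent hidden variables on arbitrary types Λ_α, Λ_β, Λ_γ with distributions μ_α, μ_β, μ_γ, and let p_A(a|β,γ), p_B(b|α,γ), p_C(c|α,β) be response kernels with outputs in {0,1,2} whose modelled distribution equals the single-token TC distribution with parameters (p_α,p_β,p_γ) ∈ (0,1)³. Then there exist functions τ_α : Λ_α → {0,1}, τ_β : Λ_β → {0,1}, τ_γ : Λ_γ → {0,1} such that Pr(τ_ξ = 1) = p_ξ for ξ = α, β, γ, and with probability one the outputs are deterministic and given by a = τ_β(β) + 1 − τ_γ(γ), b = τ_γ(γ) + 1 − τ_α(α), c = τ_α(α) + 1 − τ_β(β) (i.e. almost surely p_A assigns probability 1 to that value of a, and likewise for b and c). -/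
open MeasureTheory

/-- `tokOut` as an element of `Fin 3`. -/
def tokOutF (s t : Bool) : Fin 3 := ⟨tokOut s t, by cases s <;> cases t <;> decide⟩

/-- The value of an outcome distributed deterministically according to `p`. -/
noncomputable def detOutcome (p : Fin 3 → ℝ) : ℤ :=
  if p 1 = 1 then 1 else if p 2 = 1 then 2 else 0

lemma detOutcome_eq {p : Fin 3 → ℝ} (h0 : ∀ a, 0 ≤ p a) (h1 : ∑ a, p a = 1) {a : Fin 3}
    (ha : p a = 1) : detOutcome p = (a : ℕ) := by
  have := h0 0
  have := h0 1
  have := h0 2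
  rw [Fin.sum_univ_three] at h1
  unfold detOutcome
  fin_cases a <;> simp at ha ⊢
  · rw [if_neg (by linarith), if_neg (by linarith)]
  · exact fun h => absurd ha h
  · rw [if_neg (by linarith), if_pos ha]

lemma apply_eq_zero_of_ne {p : Fin 3 → ℝ} (h0 : ∀ a, 0 ≤ p a) (h1 : ∑ a, p a = 1) {a b : Fin 3}
    (ha : p a = 1) (hab : b ≠ a) : p b = 0 := by
  have h := Finset.add_le_sum (fun i _ => h0 i) (Finset.mem_univ a) (Finset.mem_univ b) hab.symm
  linarith [h0 b]

lemma exists_apply_pos {p : Fin 3 → ℝ} (h1 : ∑ a, p a = 1) :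
    ∃ a, 0 < p a := by
  by_contra! h
  linarith [Finset.sum_nonpos fun i (_ : i ∈ Finset.univ) => h i]

lemma apply_eq_one_of_unique {p : Fin 3 → ℝ} (h1 : ∑ a, p a = 1) {a : Fin 3}
    (h : ∀ b, b ≠ a → p b = 0) : p a = 1 := by
  rw [← h1, Finset.sum_eq_single a (fun b _ hb => h b hb) (by simp)]

/-- Independent outcomes with a fixed sum are deterministic. -/
lemma exists_det_of_sum_eq {n : ℕ} {p q r : Fin 3 → ℝ}
    (hp : (∀ a, 0 ≤ p a) ∧ ∑ a, p a = 1) (hq : (∀ a, 0 ≤ q a) ∧ ∑ a, q a = 1)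
    (hr : (∀ a, 0 ≤ r a) ∧ ∑ a, r a = 1)
    (h : ∀ a b c : Fin 3, (a : ℕ) + b + c ≠ n → p a * q b * r c = 0) :
    ∃ a b c : Fin 3, p a = 1 ∧ q b = 1 ∧ r c = 1 ∧ (a : ℕ) + b + c = n := by
  obtain ⟨a, ha⟩ := exists_apply_pos hp.2
  obtain ⟨b, hb⟩ := exists_apply_pos hq.2
  obtain ⟨c, hc⟩ := exists_apply_pos hr.2
  have habc : (a : ℕ) + b + c = n := by
    by_contra hn
    exact (mul_pos (mul_pos ha hb) hc).ne' (h a b c hn)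
  refine ⟨a, b, c, apply_eq_one_of_unique hp.2 fun i hi => ?_,
    apply_eq_one_of_unique hq.2 fun i hi => ?_, apply_eq_one_of_unique hr.2 fun i hi => ?_, habc⟩
  · simpa [hb.ne', hc.ne'] using h i b c (by have := Fin.val_ne_of_ne hi; omega)
  · simpa [ha.ne', hc.ne'] using h a i c (by have := Fin.val_ne_of_ne hi; omega)
  · simpa [ha.ne', hb.ne'] using h a b i (by have := Fin.val_ne_of_ne hi; omega)

lemma measurable_detOutcome {Ω : Type*} [MeasurableSpace Ω] {p : Fin 3 → Ω → ℝ}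
    (hp : ∀ a, Measurable (p a)) : Measurable fun x => detOutcome fun a => p a x :=
  Measurable.ite (hp 1 (measurableSet_singleton 1)) measurable_const
    (Measurable.ite (hp 2 (measurableSet_singleton 1)) measurable_const measurable_const)

section Product

variable {X Y Z : Type*} [MeasurableSpace X] [MeasurableSpace Y] [MeasurableSpace Z]
  {μ : Measure X} {ν : Measure Y} {ρ : Measure Z}

lemma ae_prod_snd [SFinite ν] [SFinite ρ] {P : Y × Z → Prop} (h : ∀ᵐ q ∂ν.prod ρ, P q) :
    ∀ᵐ t ∂μ.prod (ν.prod ρ), P t.2 :=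
  Measure.quasiMeasurePreserving_snd.ae h

lemma ae_measure_fiber_ne_zero {u : X → ℤ} (hu : Measurable u) :
    ∀ᵐ x ∂μ, μ (u ⁻¹' {u x}) ≠ 0 := by
  have h : ∀ᵐ i ∂μ.map u, μ (u ⁻¹' {i}) ≠ 0 := by
    rw [ae_iff_of_countable]
    intro i hi
    rwa [Measure.map_apply hu (measurableSet_singleton i)] at hi
  exact ae_of_ae_map hu.aemeasurable h

/-- Almost sure properties of independent integers hold on the product of their supports. -/
lemma of_ae_prod_of_measure_fiber_ne_zero [SFinite ν] {u : X → ℤ} {v : Y → ℤ} {P : ℤ → ℤ → Prop}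
    (h : ∀ᵐ q ∂μ.prod ν, P (u q.1) (v q.2)) {i j : ℤ}
    (hi : μ (u ⁻¹' {i}) ≠ 0) (hj : ν (v ⁻¹' {j}) ≠ 0) : P i j := by
  by_contra hP
  have hz : μ.prod ν ((u ⁻¹' {i}) ×ˢ (v ⁻¹' {j})) = 0 := by
    refine measure_mono_null ?_ (ae_iff.1 h)
    rintro ⟨x, y⟩ ⟨hx, hy⟩
    simp only [Set.mem_preimage, Set.mem_singleton_iff] at hx hy
    simpa [hx, hy] using hP
  rw [Measure.prod_prod, mul_eq_zero] at hz
  tauto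

variable [IsProbabilityMeasure μ] [IsProbabilityMeasure ν] [IsProbabilityMeasure ρ]

lemma measurePreserving_prodAssoc_prod :
    MeasurePreserving (MeasurableEquiv.prodAssoc : (X × Y) × Z ≃ᵐ X × Y × Z)
      ((μ.prod ν).prod ρ) (μ.prod (ν.prod ρ)) :=
  ⟨MeasurableEquiv.measurable _, Measure.prodAssoc_prod⟩

lemma ae_snd_fst_ae_of_ae_prod {P : X × Y × Z → Prop} (h : ∀ᵐ t ∂μ.prod (ν.prod ρ), P t) :
    ∀ᵐ y ∂ν, ∀ᵐ q ∂μ.prod ρ, P (q.1, y, q.2) := by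
  have hm := (measurePreserving_prodAssoc_prod (μ := μ) (ν := ν) (ρ := ρ)).comp
    (((Measure.measurePreserving_swap (μ := ν) (ν := μ)).prod (MeasurePreserving.id ρ)).comp
      (measurePreserving_prodAssoc_prod (μ := ν) (ν := μ) (ρ := ρ)).symm)
  exact Measure.ae_ae_of_ae_prod (hm.quasiMeasurePreserving.ae h)

lemma ae_snd_snd_ae_of_ae_prod {P : X × Y × Z → Prop} (h : ∀ᵐ t ∂μ.prod (ν.prod ρ), P t) :
    ∀ᵐ z ∂ρ, ∀ᵐ q ∂μ.prod ν, P (q.1, q.2, z) := by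
  have hm := (measurePreserving_prodAssoc_prod (μ := μ) (ν := ν) (ρ := ρ)).comp
    (Measure.measurePreserving_swap (μ := ρ) (ν := μ.prod ν))
  exact Measure.ae_ae_of_ae_prod (hm.quasiMeasurePreserving.ae h)

lemma ae_prod_fst_snd_fst {P : X × Y → Prop} (h : ∀ᵐ q ∂μ.prod ν, P q) :
    ∀ᵐ t ∂μ.prod (ν.prod ρ), P (t.1, t.2.1) :=
  ((MeasurePreserving.id μ).prod
    (measurePreserving_fst (μ := ν) (ν := ρ))).quasiMeasurePreserving.ae h

lemma ae_prod_fst_snd_snd {P : X × Z → Prop} (h : ∀ᵐ q ∂μ.prod ρ, P q) :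
    ∀ᵐ t ∂μ.prod (ν.prod ρ), P (t.1, t.2.2) :=
  ((MeasurePreserving.id μ).prod
    (measurePreserving_snd (μ := ν) (ν := ρ))).quasiMeasurePreserving.ae h

/-- If functions of pairs of independent variables sum to `n`, then they split additively. -/
lemma exists_additive_split {A : Y × Z → ℤ} {B : X × Z → ℤ} {C : X × Y → ℤ} {n : ℤ}
    (hB : Measurable B) (hC : Measurable C)
    (h : ∀ᵐ t ∂μ.prod (ν.prod ρ), A t.2 + B (t.1, t.2.2) + C (t.1, t.2.1) = n) :
    ∃ (u : X → ℤ) (v : Y → ℤ) (w : Z → ℤ), Measurable u ∧ Measurable v ∧ Measurable w ∧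
      ∀ᵐ t ∂μ.prod (ν.prod ρ), A t.2 = n + v t.2.1 - w t.2.2 ∧
        B (t.1, t.2.2) = w t.2.2 - u t.1 ∧ C (t.1, t.2.1) = u t.1 - v t.2.1 := by
  obtain ⟨x₀, hx₀⟩ := (Measure.ae_ae_of_ae_prod h).exists
  obtain ⟨y₀, hy₀⟩ := (ae_snd_fst_ae_of_ae_prod (h.and (ae_prod_snd (μ := μ) hx₀))).exists
  refine ⟨fun x => C (x, y₀) - C (x₀, y₀), fun y => - C (x₀, y), fun z => B (x₀, z),
    by fun_prop, by fun_prop, by fun_prop, ?_⟩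
  filter_upwards [h, ae_prod_snd (μ := μ) hx₀, ae_prod_fst_snd_snd (ν := ν) hy₀] with t h₁ h₂ h₃
  exact ⟨by linarith, by linarith [h₃.1, h₃.2], by linarith [h₃.1, h₃.2]⟩

lemma integral_prod_prod_of_bounded {F : X × Y × Z → ℝ} (hF : Measurable F) {c : ℝ}
    (hb : ∀ t, ‖F t‖ ≤ c) :
    ∫ x, ∫ y, ∫ z, F (x, y, z) ∂ρ ∂ν ∂μ = ∫ t, F t ∂μ.prod (ν.prod ρ) := by
  rw [integral_prod _ (Integrable.of_bound hF.aestronglyMeasurable c (ae_of_all _ hb))]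
  congr 1 with x
  rw [integral_prod (fun q : Y × Z => F (x, q))]
  exact Integrable.of_bound (hF.comp measurable_prodMk_left).aestronglyMeasurable c (ae_of_all _ fun q => hb _)

end Product

/-- Integer supports whose pairwise combinations obey the range constraints consist of two
consecutive integers each. -/
lemma exists_two_valued {S T U : ℤ → Prop}
    (hA : ∀ j k, T j → U k → 0 ≤ 3 + j - k ∧ 3 + j - k ≤ 2)
    (hB : ∀ i k, S i → U k → 0 ≤ k - i ∧ k - i ≤ 2)
    (hC : ∀ i j, S i → T j → 0 ≤ i - j ∧ i - j ≤ 2)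
    (h₁ : ∃ i j k, S i ∧ T j ∧ U k ∧ 3 + j - k = 0 ∧ k - i = 2)
    (h₂ : ∃ i j k, S i ∧ T j ∧ U k ∧ 3 + j - k = 2 ∧ i - j = 0)
    (h₃ : ∃ i j k, S i ∧ T j ∧ U k ∧ k - i = 0 ∧ i - j = 2) :
    ∃ m, (∀ i, S i → i = m - 1 ∨ i = m) ∧ (∀ j, T j → j = m - 2 ∨ j = m - 1) ∧
      (∀ k, U k → k = m ∨ k = m + 1) := by
  obtain ⟨i₁, j₁, k₁, hi₁, hj₁, hk₁, e₁, f₁⟩ := h₁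
  obtain ⟨i₂, j₂, k₂, hi₂, hj₂, hk₂, e₂, f₂⟩ := h₂
  obtain ⟨i₃, j₃, k₃, hi₃, hj₃, hk₃, e₃, f₃⟩ := h₃
  have a₁ := hA _ _ hj₁ hk₂
  have a₂ := hA _ _ hj₁ hk₃
  have a₃ := hA _ _ hj₂ hk₁
  have a₄ := hA _ _ hj₂ hk₃
  have a₅ := hA _ _ hj₃ hk₁
  have a₆ := hA _ _ hj₃ hk₂
  have b₁ := hB _ _ hi₁ hk₂
  have b₂ := hB _ _ hi₁ hk₃
  have b₃ := hB _ _ hi₂ hk₁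
  have b₄ := hB _ _ hi₂ hk₃
  have b₅ := hB _ _ hi₃ hk₁
  have b₆ := hB _ _ hi₃ hk₂
  have c₁ := hC _ _ hi₁ hj₂
  have c₂ := hC _ _ hi₁ hj₃
  have c₃ := hC _ _ hi₂ hj₁
  have c₄ := hC _ _ hi₂ hj₃
  have c₅ := hC _ _ hi₃ hj₁
  have c₆ := hC _ _ hi₃ hj₂
  refine ⟨k₃, fun i hi => ?_, fun j hj => ?_, fun k hk => ?_⟩
  · have := hB _ _ hi hk₁
    have := hB _ _ hi hk₃
    omega
  · have := hA _ _ hj hk₁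
    have := hA _ _ hj hk₂
    omega
  · have := hB _ _ hi₁ hk
    have := hB _ _ hi₃ hk
    omega

lemma tcP_tokOut (pα pβ pγ : ℝ) {x y z : Bool} (h : ¬ (x = y ∧ y = z)) :
    tcP pα pβ pγ (tokOut y z) (tokOut z x) (tokOut x y) = bern pα x * bern pβ y * bern pγ z := by
  revert h
  cases x <;> cases y <;> cases z <;> simp [tcP, tokOut]

lemma tcP_eq_zero (pα pβ pγ : ℝ) {a b c : ℕ} (h : a + b + c ≠ 3) : tcP pα pβ pγ a b c = 0 := by
  refine Finset.sum_eq_zero fun x _ => Finset.sum_eq_zero fun y _ =>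
    Finset.sum_eq_zero fun z _ => ?_
  rw [if_neg, mul_zero]
  rintro ⟨rfl, rfl, rfl⟩
  revert h
  cases x <;> cases y <;> cases z <;> simp [tokOut]

lemma bern_pos {p : ℝ} (hp : p ∈ Set.Ioo (0 : ℝ) 1) (t : Bool) : 0 < bern p t := by
  cases t <;> simp [bern, hp.1, hp.2]

/-- Non-constant token assignments are recovered from the token counts. -/
lemma tokOutF_eq_iff {x y z x' y' z' : Bool} (h : ¬ (x = y ∧ y = z)) :
    (tokOutF y z = tokOutF y' z' ∧ tokOutF z x = tokOutF z' x' ∧ tokOutF x y = tokOutF x' y') ↔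
      x' = x ∧ y' = y ∧ z' = z := by
  revert x y z x' y' z'
  decide

lemma integral_ite_eq_bool {X : Type*} [MeasurableSpace X] (μ : Measure X) [IsProbabilityMeasure μ]
    {τ : X → Bool} (hτ : Measurable τ) (b : Bool) :
    ∫ x, (if τ x = b then (1 : ℝ) else 0) ∂μ = bern (μ.real {x | τ x = true}) b := by
  have hs : ∀ b, MeasurableSet {x | τ x = b} := fun b => hτ (measurableSet_singleton b)
  have h : ∀ b, ∫ x, (if τ x = b then (1 : ℝ) else 0) ∂μ = μ.real {x | τ x = b} := fun b => by
    rw [← integral_indicator_one (hs b)]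
    congr 1 with x
    simp [Set.indicator_apply]
  rw [h]
  cases b
  · rw [bern, if_neg (by simp), ← probReal_compl_eq_one_sub (hs true)]
    congr 1 with x
    simp
  · simp [bern]

/-- The weights of non-constant assignments determine the parameters of the Bernoulli variables. -/
lemma eq_of_bern_mul_eq {p q r p' q' r' : ℝ} (hp : p ∈ Set.Ioo (0 : ℝ) 1)
    (hq : q ∈ Set.Ioo (0 : ℝ) 1) (hr : r ∈ Set.Ioo (0 : ℝ) 1)
    (h : ∀ x y z : Bool, ¬ (x = y ∧ y = z) →
      bern p' x * bern q' y * bern r' z = bern p x * bern q y * bern r z) :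
    p' = p ∧ q' = q ∧ r' = r := by
  have h₁ := h true true false (by decide)
  have h₂ := h false true false (by decide)
  have h₃ := h true false false (by decide)
  have h₄ := h true false true (by decide)
  simp only [bern, if_true, Bool.false_eq_true, if_false] at h₁ h₂ h₃ h₄
  obtain ⟨hp0, hp1⟩ := hp
  obtain ⟨hq0, hq1⟩ := hq
  obtain ⟨hr0, hr1⟩ := hr
  have e₁ : q' * (1 - r') = q * (1 - r) := by linear_combination h₁ + h₂
  have e₂ : p' * (1 - r') = p * (1 - r) := by linear_combination h₁ + h₃
  have e₃ : p' * (1 - q') = p * (1 - q) := by linear_combination h₃ + h₄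
  have g₁ : q * (1 - r) ≠ 0 := (mul_pos hq0 (by linarith)).ne'
  have g₂ : p * (1 - r) ≠ 0 := (mul_pos hp0 (by linarith)).ne'
  have g₃ : p * (1 - q) ≠ 0 := (mul_pos hp0 (by linarith)).ne'
  refine ⟨mul_right_cancel₀ g₁ ?_, mul_right_cancel₀ g₂ ?_, mul_right_cancel₀ g₃ ?_⟩
  · linear_combination h₁ - p' * e₁
  · linear_combination h₁ - q' * e₂
  · linear_combination h₄ - r' * e₃

/-- token-counting rigidity on the triangle.  Any local model whose
distribution (with outputs in `{0,1,2}`, encoded by `Fin 3`) is the single-token TC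
distribution with parameters `(pα,pβ,pγ) ∈ (0,1)³` arises from token variables
`τα, τβ, τγ` at the sources: `Pr(τ_ξ = 1) = p_ξ` and almost surely each response
kernel deterministically outputs the corresponding token count. -/
theorem stmt_5 {Λα Λβ Λγ : Type}
    [MeasurableSpace Λα] [MeasurableSpace Λβ] [MeasurableSpace Λγ]
    (μα : Measure Λα) (μβ : Measure Λβ) (μγ : Measure Λγ)
    [IsProbabilityMeasure μα] [IsProbabilityMeasure μβ] [IsProbabilityMeasure μγ]
    (pA : Fin 3 → Λβ → Λγ → ℝ) (pB : Fin 3 → Λα → Λγ → ℝ) (pC : Fin 3 → Λα → Λβ → ℝ)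
    (hmA : ∀ a, Measurable fun q : Λβ × Λγ => pA a q.1 q.2)
    (hmB : ∀ b, Measurable fun q : Λα × Λγ => pB b q.1 q.2)
    (hmC : ∀ c, Measurable fun q : Λα × Λβ => pC c q.1 q.2)
    (hA : ∀ x y, (∀ a, 0 ≤ pA a x y) ∧ ∑ a, pA a x y = 1)
    (hB : ∀ x y, (∀ b, 0 ≤ pB b x y) ∧ ∑ b, pB b x y = 1)
    (hC : ∀ x y, (∀ c, 0 ≤ pC c x y) ∧ ∑ c, pC c x y = 1)
    (pα pβ pγ : ℝ)
    (hpα : pα ∈ Set.Ioo (0:ℝ) 1) (hpβ : pβ ∈ Set.Ioo (0:ℝ) 1) (hpγ : pγ ∈ Set.Ioo (0:ℝ) 1)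
    (hTC : ∀ a b c : Fin 3,
      (∫ xα, ∫ xβ, ∫ xγ, pA a xβ xγ * pB b xα xγ * pC c xα xβ ∂μγ ∂μβ ∂μα)
        = tcP pα pβ pγ (a : ℕ) (b : ℕ) (c : ℕ)) :
    ∃ (τα : Λα → Bool) (τβ : Λβ → Bool) (τγ : Λγ → Bool),
      Measurable τα ∧ Measurable τβ ∧ Measurable τγ ∧
      μα {x | τα x = true} = ENNReal.ofReal pα ∧
      μβ {x | τβ x = true} = ENNReal.ofReal pβ ∧
      μγ {x | τγ x = true} = ENNReal.ofReal pγ ∧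
      (∀ᵐ q ∂(μβ.prod μγ), pA (tokOutF (τβ q.1) (τγ q.2)) q.1 q.2 = 1) ∧
      (∀ᵐ q ∂(μα.prod μγ), pB (tokOutF (τγ q.2) (τα q.1)) q.1 q.2 = 1) ∧
      (∀ᵐ q ∂(μα.prod μβ), pC (tokOutF (τα q.1) (τβ q.2)) q.1 q.2 = 1) := by
  set T := μα.prod (μβ.prod μγ)
  have hle : ∀ {p : Fin 3 → ℝ}, (∀ a, 0 ≤ p a) ∧ ∑ a, p a = 1 → ∀ a, p a ≤ 1 := fun hp a =>
    hp.2 ▸ Finset.single_le_sum (fun i _ => hp.1 i) (Finset.mem_univ a)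
  let F : Fin 3 → Fin 3 → Fin 3 → Λα × Λβ × Λγ → ℝ := fun a b c t =>
    pA a t.2.1 t.2.2 * pB b t.1 t.2.2 * pC c t.1 t.2.1
  have hF0 : ∀ a b c t, 0 ≤ F a b c t := fun a b c t =>
    mul_nonneg (mul_nonneg ((hA _ _).1 a) ((hB _ _).1 b)) ((hC _ _).1 c)
  have hFm : ∀ a b c, Measurable (F a b c) := fun a b c =>
    (((hmA a).comp measurable_snd).mul
      ((hmB b).comp (measurable_fst.prodMk (measurable_snd.comp measurable_snd)))).mul
      ((hmC c).comp (measurable_fst.prodMk (measurable_fst.comp measurable_snd)))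
  have hF1 : ∀ a b c t, ‖F a b c t‖ ≤ 1 := fun a b c t => by
    rw [Real.norm_of_nonneg (hF0 a b c t)]
    exact mul_le_one₀ (mul_le_one₀ (hle (hA _ _) a) ((hB _ _).1 b) (hle (hB _ _) b))
      ((hC _ _).1 c) (hle (hC _ _) c)
  have hFint : ∀ a b c : Fin 3, ∫ t, F a b c t ∂T = tcP pα pβ pγ (a : ℕ) (b : ℕ) (c : ℕ) :=
    fun a b c => by rw [← hTC, ← integral_prod_prod_of_bounded (hFm a b c) (hF1 a b c)]
  have hdet : ∀ᵐ t ∂T, ∃ a b c : Fin 3, pA a t.2.1 t.2.2 = 1 ∧ pB b t.1 t.2.2 = 1 ∧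
      pC c t.1 t.2.1 = 1 ∧ (a : ℕ) + b + c = 3 := by
    have h : ∀ᵐ t ∂T, ∀ a b c : Fin 3, (a : ℕ) + b + c ≠ 3 → F a b c t = 0 := by
      simp only [ae_all_iff]
      intro a b c habc
      exact (integral_eq_zero_iff_of_nonneg (hF0 a b c) (Integrable.of_bound
        (hFm a b c).aestronglyMeasurable 1 (ae_of_all _ (hF1 a b c)))).1
        ((hFint a b c).trans (tcP_eq_zero _ _ _ habc))
    filter_upwards [h] with t ht
    exact exists_det_of_sum_eq (hA _ _) (hB _ _) (hC _ _) ht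
  let A : Λβ × Λγ → ℤ := fun q => detOutcome fun a => pA a q.1 q.2
  let B : Λα × Λγ → ℤ := fun q => detOutcome fun b => pB b q.1 q.2
  let C : Λα × Λβ → ℤ := fun q => detOutcome fun c => pC c q.1 q.2
  have hAeq : ∀ {q a}, pA a q.1 q.2 = 1 → A q = (a : ℕ) :=
    fun h => detOutcome_eq (hA _ _).1 (hA _ _).2 h
  have hBeq : ∀ {q b}, pB b q.1 q.2 = 1 → B q = (b : ℕ) :=
    fun h => detOutcome_eq (hB _ _).1 (hB _ _).2 h
  have hCeq : ∀ {q c}, pC c q.1 q.2 = 1 → C q = (c : ℕ) :=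
    fun h => detOutcome_eq (hC _ _).1 (hC _ _).2 h
  have hsum : ∀ᵐ t ∂T, A t.2 + B (t.1, t.2.2) + C (t.1, t.2.1) = 3 := by
    filter_upwards [hdet] with t ⟨a, b, c, ha, hb, hc, habc⟩
    rw [hAeq ha, hBeq (q := (t.1, t.2.2)) hb, hCeq (q := (t.1, t.2.1)) hc]
    exact_mod_cast habc
  obtain ⟨u, v, w, hu, hv, hw, hsplit⟩ := exists_additive_split (A := A)
    (measurable_detOutcome hmB) (measurable_detOutcome hmC) hsum
  have hvals : ∀ᵐ t ∂T, ∃ a b c : Fin 3, pA a t.2.1 t.2.2 = 1 ∧ pB b t.1 t.2.2 = 1 ∧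
      pC c t.1 t.2.1 = 1 ∧ 3 + v t.2.1 - w t.2.2 = (a : ℕ) ∧ w t.2.2 - u t.1 = (b : ℕ) ∧
      u t.1 - v t.2.1 = (c : ℕ) := by
    filter_upwards [hdet, hsplit] with t ⟨a, b, c, ha, hb, hc, _⟩ ⟨h₁, h₂, h₃⟩
    exact ⟨a, b, c, ha, hb, hc, h₁ ▸ hAeq ha, h₂ ▸ hBeq (q := (t.1, t.2.2)) hb,
      h₃ ▸ hCeq (q := (t.1, t.2.1)) hc⟩
  have hsupp : ∀ᵐ t ∂T, μα (u ⁻¹' {u t.1}) ≠ 0 ∧ μβ (v ⁻¹' {v t.2.1}) ≠ 0 ∧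
      μγ (w ⁻¹' {w t.2.2}) ≠ 0 := by
    filter_upwards [Measure.quasiMeasurePreserving_fst.ae (ae_measure_fiber_ne_zero hu),
      ae_prod_snd (Measure.quasiMeasurePreserving_fst.ae (ae_measure_fiber_ne_zero hv)),
      ae_prod_snd (Measure.quasiMeasurePreserving_snd.ae (ae_measure_fiber_ne_zero hw))]
      with t h₁ h₂ h₃
    exact ⟨h₁, h₂, h₃⟩
  have hex : ∀ x y z : Bool, ¬ (x = y ∧ y = z) → ∃ i j k, μα (u ⁻¹' {i}) ≠ 0 ∧
      μβ (v ⁻¹' {j}) ≠ 0 ∧ μγ (w ⁻¹' {k}) ≠ 0 ∧ 3 + j - k = tokOut y z ∧ k - i = tokOut z x ∧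
      i - j = tokOut x y := by
    intro x y z hxyz
    by_contra hcon
    have hzero : F (tokOutF y z) (tokOutF z x) (tokOutF x y) =ᵐ[T] 0 := by
      filter_upwards [hvals, hsupp] with t ⟨a, b, c, ha, hb, hc, ha', hb', hc'⟩ ⟨h₁, h₂, h₃⟩
      by_contra hne
      have ea : tokOutF y z = a := by
        by_contra h
        exact hne (by simp [F, apply_eq_zero_of_ne (hA _ _).1 (hA _ _).2 ha h])
      have eb : tokOutF z x = b := by
        by_contra h
        exact hne (by simp [F, apply_eq_zero_of_ne (hB _ _).1 (hB _ _).2 hb h])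
      have ec : tokOutF x y = c := by
        by_contra h
        exact hne (by simp [F, apply_eq_zero_of_ne (hC _ _).1 (hC _ _).2 hc h])
      subst ea eb ec
      exact hcon ⟨_, _, _, h₁, h₂, h₃, ha', hb', hc'⟩
    have h := hFint (tokOutF y z) (tokOutF z x) (tokOutF x y)
    rw [integral_congr_ae hzero] at h
    simp only [Pi.zero_apply, integral_zero, tokOutF] at h
    rw [tcP_tokOut _ _ _ hxyz] at h
    exact (mul_pos (mul_pos (bern_pos hpα x) (bern_pos hpβ y)) (bern_pos hpγ z)).ne h
  obtain ⟨_, hbA⟩ := (Measure.ae_ae_of_ae_prod hvals).exists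
  obtain ⟨_, hbB⟩ := (ae_snd_fst_ae_of_ae_prod hvals).exists
  obtain ⟨_, hbC⟩ := (ae_snd_snd_ae_of_ae_prod hvals).exists
  obtain ⟨m, hmu, hmv, hmw⟩ := exists_two_valued
    (S := fun i => μα (u ⁻¹' {i}) ≠ 0) (T := fun j => μβ (v ⁻¹' {j}) ≠ 0)
    (U := fun k => μγ (w ⁻¹' {k}) ≠ 0)
    (fun j k hj hk => of_ae_prod_of_measure_fiber_ne_zero
      (P := fun j k => 0 ≤ 3 + j - k ∧ 3 + j - k ≤ 2)
      (by filter_upwards [hbA] with q ⟨a, b, c, _, _, _, h, _, _⟩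
          have := a.2
          omega) hj hk)
    (fun i k hi hk => of_ae_prod_of_measure_fiber_ne_zero
      (P := fun i k => 0 ≤ k - i ∧ k - i ≤ 2)
      (by filter_upwards [hbB] with q ⟨a, b, c, _, _, _, _, h, _⟩
          have := b.2
          omega) hi hk)
    (fun i j hi hj => of_ae_prod_of_measure_fiber_ne_zero
      (P := fun i j => 0 ≤ i - j ∧ i - j ≤ 2)
      (by filter_upwards [hbC] with q ⟨a, b, c, _, _, _, _, _, h⟩
          have := c.2
          omega) hi hj)
    (by obtain ⟨i, j, k, hi, hj, hk, h₁, h₂, -⟩ := hex false false true (by decide)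
        exact ⟨i, j, k, hi, hj, hk, h₁, h₂⟩)
    (by obtain ⟨i, j, k, hi, hj, hk, h₁, -, h₃⟩ := hex false true false (by decide)
        exact ⟨i, j, k, hi, hj, hk, h₁, h₃⟩)
    (by obtain ⟨i, j, k, hi, hj, hk, -, h₂, h₃⟩ := hex true false false (by decide)
        exact ⟨i, j, k, hi, hj, hk, h₂, h₃⟩)
  let τα : Λα → Bool := fun x => decide (u x = m)
  let τβ : Λβ → Bool := fun y => decide (v y = m - 1)
  let τγ : Λγ → Bool := fun z => decide (w z = m + 1)
  have hτα : Measurable τα := (measurable_of_countable fun i : ℤ => decide (i = m)).comp hu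
  have hτβ : Measurable τβ := (measurable_of_countable fun i : ℤ => decide (i = m - 1)).comp hv
  have hτγ : Measurable τγ := (measurable_of_countable fun i : ℤ => decide (i = m + 1)).comp hw
  have hmain : ∀ᵐ t ∂T, pA (tokOutF (τβ t.2.1) (τγ t.2.2)) t.2.1 t.2.2 = 1 ∧
      pB (tokOutF (τγ t.2.2) (τα t.1)) t.1 t.2.2 = 1 ∧
      pC (tokOutF (τα t.1) (τβ t.2.1)) t.1 t.2.1 = 1 := by
    filter_upwards [hvals, hsupp] with t ⟨a, b, c, ha, hb, hc, ha', hb', hc'⟩ ⟨h₁, h₂, h₃⟩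
    have hu' := hmu _ h₁
    have hv' := hmv _ h₂
    have hw' := hmw _ h₃
    have ea : tokOutF (τβ t.2.1) (τγ t.2.2) = a := by
      apply Fin.ext
      simp only [tokOutF, tokOut, τβ, τγ, decide_eq_true_eq]
      split_ifs <;> omega
    have eb : tokOutF (τγ t.2.2) (τα t.1) = b := by
      apply Fin.ext
      simp only [tokOutF, tokOut, τα, τγ, decide_eq_true_eq]
      split_ifs <;> omega
    have ec : tokOutF (τα t.1) (τβ t.2.1) = c := by
      apply Fin.ext
      simp only [tokOutF, tokOut, τα, τβ, decide_eq_true_eq]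
      split_ifs <;> omega
    rw [ea, eb, ec]
    exact ⟨ha, hb, hc⟩
  have hprob : ∀ x y z : Bool, ¬ (x = y ∧ y = z) →
      bern (μα.real {x | τα x = true}) x * bern (μβ.real {x | τβ x = true}) y *
        bern (μγ.real {x | τγ x = true}) z = bern pα x * bern pβ y * bern pγ z := by
    intro x y z hxyz
    rw [← integral_ite_eq_bool μα hτα, ← integral_ite_eq_bool μβ hτβ,
      ← integral_ite_eq_bool μγ hτγ, mul_assoc, ← integral_prod_mul, ← integral_prod_mul,
      ← tcP_tokOut _ _ _ hxyz]
    refine Eq.trans (integral_congr_ae ?_) (hFint (tokOutF y z) (tokOutF z x) (tokOutF x y))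
    filter_upwards [hmain] with t ⟨ha, hb, hc⟩
    have hval : ∀ {p : Fin 3 → ℝ}, (∀ a, 0 ≤ p a) ∧ ∑ a, p a = 1 → ∀ {a}, p a = 1 →
        ∀ b, p b = if b = a then 1 else 0 := fun hp a ha b => by
      split_ifs with h
      · rw [h, ha]
      · exact apply_eq_zero_of_ne hp.1 hp.2 ha h
    simp only [F, hval (p := fun a => pA a t.2.1 t.2.2) (hA _ _) ha,
      hval (p := fun b => pB b t.1 t.2.2) (hB _ _) hb,
      hval (p := fun c => pC c t.1 t.2.1) (hC _ _) hc, ← ite_and, mul_ite, mul_one, mul_zero]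
    have := tokOutF_eq_iff (x' := τα t.1) (y' := τβ t.2.1) (z' := τγ t.2.2) hxyz
    refine if_congr ?_ rfl rfl
    tauto
  obtain ⟨eα, eβ, eγ⟩ := eq_of_bern_mul_eq hpα hpβ hpγ hprob
  refine ⟨τα, τβ, τγ, hτα, hτβ, hτγ, ?_, ?_, ?_, ?_, ?_, ?_⟩
  · rw [← eα, ofReal_measureReal]
  · rw [← eβ, ofReal_measureReal]
  · rw [← eγ, ofReal_measureReal]
  · exact (Measure.ae_ae_of_ae_prod hmain).exists.elim fun _ h => h.mono fun _ hq => hq.1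
  · exact (ae_snd_fst_ae_of_ae_prod hmain).exists.elim fun _ h => h.mono fun _ hq => hq.2.1
  · exact (ae_snd_snd_ae_of_ae_prod hmain).exists.elim fun _ h => h.mono fun _ hq => hq.2.2
end

section
/- Let c ∈ [0,1], R ∈ [0,1], and F₁, F₂ ∈ [0,1] with F₁·F₂ ≥ R. Then (c + √(1−F₁²))·(c + √(1−F₂²)) ≤ (c + √(1−R))². -/
/-- under the fidelity-product constraint `F₁ F₂ ≥ R`, the guessing
expression is maximized at `F₁ = F₂ = √R`. -/
theorem stmt_8 (c R F₁ F₂ : ℝ) (hc : c ∈ Set.Icc (0:ℝ) 1) (hR : R ∈ Set.Icc (0:ℝ) 1)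
    (hF₁ : F₁ ∈ Set.Icc (0:ℝ) 1) (hF₂ : F₂ ∈ Set.Icc (0:ℝ) 1) (h : R ≤ F₁ * F₂) :
    (c + Real.sqrt (1 - F₁ ^ 2)) * (c + Real.sqrt (1 - F₂ ^ 2)) ≤
      (c + Real.sqrt (1 - R)) ^ 2 := by
  obtain ⟨hc0, -⟩ := hc
  obtain ⟨h10, h11⟩ := hF₁
  obtain ⟨h20, h21⟩ := hF₂
  have hs := Real.sq_sqrt (show 0 ≤ 1 - F₁ ^ 2 by nlinarith)
  have ht := Real.sq_sqrt (show 0 ≤ 1 - F₂ ^ 2 by nlinarith)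
  have hu := Real.sq_sqrt (show 0 ≤ 1 - R by linarith [hR.2])
  have hu0 := Real.sqrt_nonneg (1 - R)
  set s := Real.sqrt (1 - F₁ ^ 2)
  set t := Real.sqrt (1 - F₂ ^ 2)
  set u := Real.sqrt (1 - R)
  have hprod : s * t ≤ u ^ 2 := by
    nlinarith [sq_nonneg (s - t), sq_nonneg (F₁ - F₂)]
  have hsum : s + t ≤ 2 * u := by
    refine (abs_le_of_sq_le_sq' ?_ (by positivity)).2
    nlinarith [sq_nonneg (F₁ - F₂)]
  nlinarith [mul_le_mul_of_nonneg_left hsum hc0]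
end

section
/- Let (p_k)_{k∈K} be a finite family of nonnegative reals with Σ_k p_k = 1, let c_k ∈ [0,1] for each k, and let r ∈ [0, 1/2]. If Σ_k p_k · c_k·√(1−c_k²) ≥ r, then Σ_k p_k · h(c_k²) ≥ h((1 − √(1 − 4r²))/2). -/
/-- Binary entropy (natural logarithm; the inequality is base-independent). -/
noncomputable def binEnt (x : ℝ) : ℝ := -(x * Real.log x) - (1 - x) * Real.log (1 - x)

lemma binEnt_eq_binEntropy (x : ℝ) : binEnt x = Real.binEntropy x := by
  rw [Real.binEntropy_eq_negMulLog_add_negMulLog_one_sub, Real.negMulLog, Real.negMulLog, binEnt]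
  ring

lemma two_mul_le_log_sub_log {s : ℝ} (hs0 : 0 ≤ s) (hs1 : s < 1) :
    2 * s ≤ Real.log (1 + s) - Real.log (1 - s) := by
  have hsum := Real.hasSum_log_sub_log_of_abs_lt_one (abs_lt.2 ⟨by linarith, hs1⟩)
  simpa using le_hasSum hsum 0 fun k _ => by positivity

/-- The binary entropy as a function of the coherence `r = √(x (1 - x))`. -/
noncomputable def coherenceEntropy (r : ℝ) : ℝ :=
  Real.binEntropy ((1 - Real.sqrt (1 - 4 * r ^ 2)) / 2)

lemma hasDerivAt_sqrt_one_sub_four_mul_sq {r : ℝ} (hr : 0 < 1 - 4 * r ^ 2) :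
    HasDerivAt (fun r : ℝ => Real.sqrt (1 - 4 * r ^ 2)) (-4 * r / Real.sqrt (1 - 4 * r ^ 2)) r := by
  have hpoly : HasDerivAt (fun r : ℝ => 1 - 4 * r ^ 2) (-8 * r) r := by
    refine (((hasDerivAt_id' r).pow 2).const_mul 4 |>.const_sub 1).congr_deriv ?_
    norm_num
    ring
  refine (hpoly.sqrt hr.ne').congr_deriv ?_
  have := Real.sqrt_pos.2 hr
  field_simp
  ring

lemma sqrt_one_sub_four_mul_sq_mem_Ioo {r : ℝ} (hr : r ∈ Set.Ioo (0 : ℝ) (1 / 2)) :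
    Real.sqrt (1 - 4 * r ^ 2) ∈ Set.Ioo (0 : ℝ) 1 := by
  obtain ⟨h0, h1⟩ := hr
  refine ⟨Real.sqrt_pos.2 (by nlinarith), ?_⟩
  rw [Real.sqrt_lt' one_pos]
  nlinarith

lemma hasDerivAt_coherenceEntropy {r : ℝ} (hr : r ∈ Set.Ioo (0 : ℝ) (1 / 2)) :
    HasDerivAt coherenceEntropy
      (2 * r * (Real.log (1 + Real.sqrt (1 - 4 * r ^ 2)) - Real.log (1 - Real.sqrt (1 - 4 * r ^ 2)))
        / Real.sqrt (1 - 4 * r ^ 2)) r := by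
  obtain ⟨hs0, hs1⟩ := sqrt_one_sub_four_mul_sq_mem_Ioo hr
  have hs := hasDerivAt_sqrt_one_sub_four_mul_sq (Real.sqrt_pos.1 hs0)
  have hx := (hs.const_sub 1).div_const 2
  have hent := Real.hasDerivAt_binEntropy (p := (1 - Real.sqrt (1 - 4 * r ^ 2)) / 2)
    (by linarith) (by linarith)
  refine (hent.comp r hx).congr_deriv ?_
  generalize Real.sqrt (1 - 4 * r ^ 2) = s at hs0 hs1
  rw [show 1 - (1 - s) / 2 = (1 + s) / 2 by ring, Real.log_div (by linarith) two_ne_zero,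
    Real.log_div (by linarith) two_ne_zero]
  field_simp
  ring

lemma hasDerivAt_deriv_coherenceEntropy {r : ℝ} (hr : r ∈ Set.Ioo (0 : ℝ) (1 / 2)) :
    HasDerivAt (fun r : ℝ =>
      2 * r * (Real.log (1 + Real.sqrt (1 - 4 * r ^ 2)) - Real.log (1 - Real.sqrt (1 - 4 * r ^ 2)))
        / Real.sqrt (1 - 4 * r ^ 2))
      ((2 * (Real.log (1 + Real.sqrt (1 - 4 * r ^ 2)) - Real.log (1 - Real.sqrt (1 - 4 * r ^ 2)))
        - 4 * Real.sqrt (1 - 4 * r ^ 2)) / Real.sqrt (1 - 4 * r ^ 2) ^ 3) r := by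
  obtain ⟨hs0, hs1⟩ := sqrt_one_sub_four_mul_sq_mem_Ioo hr
  have hs := hasDerivAt_sqrt_one_sub_four_mul_sq (Real.sqrt_pos.1 hs0)
  have hsq := Real.sq_sqrt (Real.sqrt_pos.1 hs0).le
  have hplus := (hs.const_add 1).log (by linarith)
  have hminus := (hs.const_sub 1).log (by linarith)
  refine ((((hasDerivAt_id' r).const_mul 2).mul (hplus.sub hminus)).div hs hs0.ne').congr_deriv ?_
  simp only [Pi.mul_apply, Pi.sub_apply]
  generalize Real.sqrt (1 - 4 * r ^ 2) = s at hs0 hs1 hsq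
  generalize Real.log (1 + s) - Real.log (1 - s) = L
  have hp : 1 + s ≠ 0 := by linarith
  have hm : 1 - s ≠ 0 := by linarith
  have hr2 : r ^ 2 = (1 - s ^ 2) / 4 := by linarith
  field_simp
  ring_nf
  simp only [hr2]
  ring

lemma convexOn_coherenceEntropy : ConvexOn ℝ (Set.Icc 0 (1 / 2)) coherenceEntropy := by
  refine convexOn_of_hasDerivWithinAt2_nonneg (convex_Icc _ _)
    (Continuous.continuousOn (by unfold coherenceEntropy; fun_prop))
    (fun r hr => (hasDerivAt_coherenceEntropy (by rwa [interior_Icc] at hr)).hasDerivWithinAt)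
    (fun r hr => (hasDerivAt_deriv_coherenceEntropy
      (by rwa [interior_Icc] at hr)).hasDerivWithinAt) fun r hr => ?_
  rw [interior_Icc] at hr
  obtain ⟨hs0, hs1⟩ := sqrt_one_sub_four_mul_sq_mem_Ioo hr
  have := two_mul_le_log_sub_log hs0.le hs1
  exact div_nonneg (by linarith) (by positivity)

lemma monotoneOn_coherenceEntropy : MonotoneOn coherenceEntropy (Set.Icc 0 (1 / 2)) := by
  intro a ha b hb hab
  have hmem : ∀ r : ℝ, (1 - Real.sqrt (1 - 4 * r ^ 2)) / 2 ∈ Set.Icc (0 : ℝ) 2⁻¹ := by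
    intro r
    have h0 := Real.sqrt_nonneg (1 - 4 * r ^ 2)
    have h1 : Real.sqrt (1 - 4 * r ^ 2) ≤ 1 := Real.sqrt_le_one.2 (by nlinarith [sq_nonneg r])
    constructor <;> linarith
  refine Real.binEntropy_strictMonoOn.monotoneOn (hmem a) (hmem b) ?_
  have : Real.sqrt (1 - 4 * b ^ 2) ≤ Real.sqrt (1 - 4 * a ^ 2) :=
    Real.sqrt_le_sqrt (by nlinarith [ha.1])
  linarith

lemma mul_sqrt_one_sub_sq_mem_Icc {c : ℝ} (hc : c ∈ Set.Icc (0 : ℝ) 1) :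
    c * Real.sqrt (1 - c ^ 2) ∈ Set.Icc (0 : ℝ) (1 / 2) := by
  have hsq := Real.sq_sqrt (show 0 ≤ 1 - c ^ 2 by nlinarith [hc.1, hc.2])
  exact ⟨mul_nonneg hc.1 (Real.sqrt_nonneg _), by nlinarith [sq_nonneg (c - Real.sqrt (1 - c ^ 2))]⟩

lemma coherenceEntropy_mul_sqrt_one_sub_sq {c : ℝ} (hc : c ∈ Set.Icc (0 : ℝ) 1) :
    coherenceEntropy (c * Real.sqrt (1 - c ^ 2)) = Real.binEntropy (c ^ 2) := by
  have hsq := Real.sq_sqrt (show 0 ≤ 1 - c ^ 2 by nlinarith [hc.1, hc.2])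
  have habs : Real.sqrt (1 - 4 * (c * Real.sqrt (1 - c ^ 2)) ^ 2) = |1 - 2 * c ^ 2| := by
    rw [← Real.sqrt_sq_eq_abs, mul_pow, hsq]
    ring_nf
  rw [coherenceEntropy, habs]
  rcases abs_choice (1 - 2 * c ^ 2) with h | h <;> rw [h]
  · ring_nf
  · rw [← Real.binEntropy_one_sub]
    ring_nf

/-- entanglement-of-formation optimization lower bound. -/
theorem stmt_9 {K : Type} [Fintype K] (p c : K → ℝ)
    (hp : ∀ k, 0 ≤ p k) (hps : ∑ k, p k = 1)
    (hc : ∀ k, c k ∈ Set.Icc (0:ℝ) 1)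
    (r : ℝ) (hr : r ∈ Set.Icc (0:ℝ) (1/2))
    (h : r ≤ ∑ k, p k * (c k * Real.sqrt (1 - c k ^ 2))) :
    binEnt ((1 - Real.sqrt (1 - 4 * r ^ 2)) / 2) ≤ ∑ k, p k * binEnt (c k ^ 2) := by
  simp only [binEnt_eq_binEntropy]
  have hmem : ∀ k ∈ Finset.univ, c k * Real.sqrt (1 - c k ^ 2) ∈ Set.Icc (0 : ℝ) (1 / 2) :=
    fun k _ => mul_sqrt_one_sub_sq_mem_Icc (hc k)
  have hmean := (convex_Icc (0 : ℝ) (1 / 2)).sum_mem (fun k _ => hp k) hps hmem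
  have hjensen := convexOn_coherenceEntropy.map_sum_le (fun k _ => hp k) hps hmem
  simp only [smul_eq_mul] at hmean hjensen
  calc coherenceEntropy r
      ≤ coherenceEntropy (∑ k, p k * (c k * Real.sqrt (1 - c k ^ 2))) :=
        monotoneOn_coherenceEntropy hr hmean h
    _ ≤ ∑ k, p k * coherenceEntropy (c k * Real.sqrt (1 - c k ^ 2)) := hjensen
    _ = ∑ k, p k * Real.binEntropy (c k ^ 2) := by
        simp only [coherenceEntropy_mul_sqrt_one_sub_sq (hc _)]
end
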